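/- arXiv:1307.1784 — 11 statements merged into one kernel-verified Lean document; each statement's English description precedes it below -/
import Mathlib

section
/- Let m be a positive integer and let K be a field of characteristic zero that is finitely generated as a field extension of ℚ (i.e., K is generated over ℚ by a finite set of elements). Then there exists a constant B (depending on K and m) such that every finite subgroup G of GL_m(K) has order |G| ≤ B. -/
/-!
Reduction modulo `6` is injective on a finite subgroup of `GL n ℤ`: an element of prime order `p`
in the kernel would satisfy `(A - 1) * ∑ i < p, A ^ i = 0`, while `det (∑ i < p, A ^ i)` is nonzero,
being congruent to `p ^ n` modulo `6`, and `6` divides no power of a prime. The same computation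
shows that evaluation at `0` is injective on a finite subgroup of `GL n E[X]` when `E` has
characteristic zero.

A finite subgroup of `GL n F`, where `F` is the fraction field of a principal ideal domain `R`,
stabilizes a lattice and therefore embeds in `GL n R`. This passes from `ℤ` to `ℚ` and from `E[X]`
to `E(X)`, and restriction of scalars embeds `GL n L` in `GL (n * [L : E]) E` for a finite
extension `L / E`. A finitely generated extension of `ℚ` is a tower of such simple extensions.
-/

open Matrix Module Polynomial

/-- A group has bounded finite subgroups if the orders of its finite subgroups are bounded by a
single constant. -/
def BoundedFiniteSubgroups (Γ : Type*) [Group Γ] : Prop :=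
  ∃ B : ℕ, ∀ G : Subgroup Γ, Finite G → Nat.card G ≤ B

namespace BoundedFiniteSubgroups

variable {Γ Δ : Type*} [Group Γ] [Group Δ]

theorem of_finite [Finite Γ] : BoundedFiniteSubgroups Γ :=
  ⟨Nat.card Γ, fun G _ => G.card_le_card_group⟩

theorem of_forall_exists_injective (hΔ : BoundedFiniteSubgroups Δ)
    (h : ∀ G : Subgroup Γ, Finite G → ∃ f : G →* Δ, Function.Injective f) :
    BoundedFiniteSubgroups Γ := by
  obtain ⟨B, hB⟩ := hΔ
  refine ⟨B, fun G hG => ?_⟩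
  obtain ⟨f, hf⟩ := h G hG
  calc
    Nat.card G = Nat.card f.range := Nat.card_congr (f.ofInjective hf).toEquiv
    _ ≤ B := hB f.range (Finite.of_equiv G (f.ofInjective hf).toEquiv)

theorem of_injective (hΔ : BoundedFiniteSubgroups Δ) (f : Γ →* Δ) (hf : Function.Injective f) :
    BoundedFiniteSubgroups Γ :=
  hΔ.of_forall_exists_injective fun G _ =>
    ⟨f.comp G.subtype, hf.comp G.subtype_injective⟩

end BoundedFiniteSubgroups

theorem injective_of_forall_prime_orderOf {G M : Type*} [Group G] [Finite G] [Monoid M]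
    (f : G →* M) (hf : ∀ g : G, (orderOf g).Prime → f g ≠ 1) : Function.Injective f := by
  rw [injective_iff_map_eq_one]
  by_contra! ⟨g, hfg, hg⟩
  obtain ⟨p, hp, hpg⟩ := Nat.exists_prime_and_dvd (mt orderOf_eq_one_iff.mp hg)
  have horder : orderOf (g ^ (orderOf g / p)) = p :=
    orderOf_pow_orderOf_div (orderOf_pos g).ne' hpg
  exact hf (g ^ (orderOf g / p)) (horder.symm ▸ hp) (by rw [map_pow, hfg, one_pow])

theorem BoundedFiniteSubgroups.of_forall_prime_orderOf {Γ Δ : Type*} [Group Γ] [Group Δ]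
    (hΔ : BoundedFiniteSubgroups Δ) (f : Γ →* Δ)
    (hf : ∀ g : Γ, (orderOf g).Prime → f g ≠ 1) : BoundedFiniteSubgroups Γ :=
  hΔ.of_forall_exists_injective fun G _ =>
    ⟨f.comp G.subtype, injective_of_forall_prime_orderOf _ fun g hg =>
      hf g (by rwa [Subgroup.orderOf_coe])⟩

section Reduction

variable {n R S : Type*} [Fintype n] [DecidableEq n] [CommRing R] [IsDomain R] [CommRing S]

theorem eq_one_of_pow_eq_one_of_map_eq_one (φ : R →+* S) {l : ℕ} (hl : ¬IsNilpotent (l : S))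
    {A : Matrix n n R} (hA : A ^ l = 1) (hφ : φ.mapMatrix A = 1) : A = 1 := by
  set N : Matrix n n R := ∑ i ∈ Finset.range l, A ^ i with hN
  have hmul : (A - 1) * N = 0 := by rw [hN, mul_geom_sum, hA, sub_self]
  have hφN : φ.mapMatrix N = l • (1 : Matrix n n S) := by simp [hN, map_sum, map_pow, hφ]
  have hdet : N.det ≠ 0 := by
    intro h0
    refine hl ⟨Fintype.card n, ?_⟩
    calc
      (l : S) ^ Fintype.card n = (l • (1 : Matrix n n S)).det := by
        rw [← Nat.cast_smul_eq_nsmul S, det_smul, det_one, mul_one]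
      _ = φ N.det := by rw [RingHom.map_det, hφN]
      _ = 0 := by rw [h0, map_zero]
  have hsmul : N.det • (A - 1) = 0 := by
    calc
      N.det • (A - 1) = (A - 1) * N * N.adjugate := by
        rw [mul_assoc, mul_adjugate, Matrix.mul_smul, mul_one]
      _ = 0 := by rw [hmul, zero_mul]
  exact sub_eq_zero.mp ((smul_eq_zero.mp hsmul).resolve_left hdet)

theorem BoundedFiniteSubgroups.of_ringHom (φ : R →+* S)
    (hφ : ∀ p : ℕ, p.Prime → ¬IsNilpotent (p : S)) (h : BoundedFiniteSubgroups (GL n S)) :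
    BoundedFiniteSubgroups (GL n R) := by
  refine h.of_forall_prime_orderOf (GeneralLinearGroup.map φ) fun g hg hmap => ?_
  have hpow : (g : Matrix n n R) ^ orderOf g = 1 := by
    rw [← Units.val_pow_eq_pow_val, pow_orderOf_eq_one, Units.val_one]
  have hone : g = 1 := Units.ext <|
    eq_one_of_pow_eq_one_of_map_eq_one φ (hφ _ hg) hpow (congrArg Units.val hmap)
  exact hg.ne_one (orderOf_eq_one_iff.mpr hone)

end Reduction

theorem not_isNilpotent_natCast_zmod_six {p : ℕ} (hp : p.Prime) :
    ¬IsNilpotent (p : ZMod 6) := by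
  rintro ⟨k, hk⟩
  have hdvd : 6 ∣ p ^ k := by rwa [← Nat.cast_pow, ZMod.natCast_eq_zero_iff] at hk
  have h2 : 2 = p := (Nat.prime_dvd_prime_iff_eq Nat.prime_two hp).mp <|
    Nat.prime_two.dvd_of_dvd_pow ((by norm_num : 2 ∣ 6).trans hdvd)
  have h3 : 3 = p := (Nat.prime_dvd_prime_iff_eq Nat.prime_three hp).mp <|
    Nat.prime_three.dvd_of_dvd_pow ((by norm_num : 3 ∣ 6).trans hdvd)
  omega

theorem boundedFiniteSubgroups_GL_int (n : Type*) [Fintype n] [DecidableEq n] :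
    BoundedFiniteSubgroups (GL n ℤ) :=
  .of_ringHom (Int.castRingHom (ZMod 6)) (fun _ => not_isNilpotent_natCast_zmod_six) .of_finite

theorem BoundedFiniteSubgroups.polynomial {n E : Type*} [Fintype n] [DecidableEq n]
    [CommRing E] [IsDomain E] [CharZero E] (h : BoundedFiniteSubgroups (GL n E)) :
    BoundedFiniteSubgroups (GL n E[X]) :=
  .of_ringHom (evalRingHom 0)
    (fun _ hp => mt IsNilpotent.eq_zero (Nat.cast_ne_zero.mpr hp.ne_zero)) h

section Lattice

variable {R A G V : Type*} [CommRing R] [CommRing A] [Algebra R A] [Monoid G]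
  [AddCommGroup V] [Module R V] [Module A V] [IsScalarTower R A V]

variable (R) in
theorem exists_isLattice_forall_apply_mem [Finite G] [Module.Finite A V]
    (ρ : Representation A G V) :
    ∃ Λ : Submodule R V, Λ.IsLattice A ∧ ∀ g, ∀ x ∈ Λ, ρ g x ∈ Λ := by
  obtain ⟨s, hs⟩ : (⊤ : Submodule A V).FG := Module.Finite.fg_top
  let orbit : G × s → V := fun p => ρ p.1 p.2
  refine ⟨Submodule.span R (Set.range orbit), ⟨Submodule.fg_span (Set.finite_range orbit), ?_⟩,
    fun g => ?_⟩
  · rw [Submodule.span_span_of_tower, eq_top_iff, ← hs]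
    refine Submodule.span_mono fun x hx => ⟨(1, ⟨x, hx⟩), ?_⟩
    simp [orbit]
  · suffices Submodule.span R (Set.range orbit) ≤
        (Submodule.span R (Set.range orbit)).comap ((ρ g).restrictScalars R) from this
    rw [Submodule.span_le]
    rintro _ ⟨⟨a, x⟩, rfl⟩
    refine Submodule.subset_span ⟨(g * a, x), ?_⟩
    simp [orbit]

/-- The `R`-linear representation on a stable `R`-submodule `Λ` of an `A`-linear representation,
where `A` is an `R`-algebra. Unlike in `Subrepresentation`, `Λ` need not be an `A`-submodule. -/
def integralRepresentation (ρ : Representation A G V) (Λ : Submodule R V)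
    (hΛ : ∀ g, ∀ x ∈ Λ, ρ g x ∈ Λ) : Representation R G Λ where
  toFun g := ((ρ g).restrictScalars R).restrict (hΛ g)
  map_one' := by ext; simp
  map_mul' g h := by ext x; exact LinearMap.congr_fun (map_mul ρ g h) x

theorem integralRepresentation_injective {ρ : Representation A G V} (hρ : Function.Injective ρ)
    (Λ : Submodule R V) [Λ.IsLattice A] (hΛ : ∀ g, ∀ x ∈ Λ, ρ g x ∈ Λ) :
    Function.Injective (integralRepresentation ρ Λ hΛ) := by
  intro g h hgh
  refine hρ (LinearMap.ext_on (Submodule.IsLattice.span_eq_top (M := Λ)) fun x hx => ?_)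
  exact congrArg Subtype.val (LinearMap.congr_fun hgh ⟨x, hx⟩)

end Lattice

section FractionRing

variable {n R F : Type*} [CommRing R] [IsDomain R] [IsPrincipalIdealRing R]
  [Field F] [Algebra R F] [IsFractionRing R F]

variable (F) in
theorem nonempty_basis_of_isLattice [Finite n] (Λ : Submodule R (n → F)) [Λ.IsLattice F] :
    Nonempty (Basis n R Λ) := by
  have := Fintype.ofFinite n
  let b := Module.Free.chooseBasis R Λ
  have hcard : Fintype.card (Module.Free.ChooseBasisIndex R Λ) = Fintype.card n := by
    rw [← Module.finrank_eq_card_basis b, Submodule.IsLattice.finrank_of_pi F]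
  exact ⟨b.reindex (Fintype.equivOfCardEq hcard)⟩

variable [Fintype n] [DecidableEq n]

variable (R) in
theorem exists_injective_GL_of_isFractionRing {G : Type*} [Group G] [Finite G] {ρ : G →* GL n F}
    (hρ : Function.Injective ρ) : ∃ σ : G →* GL n R, Function.Injective σ := by
  let τ : Representation F G (n → F) :=
    (Matrix.toLinAlgEquiv' : Matrix n n F ≃ₐ[F] _).toMonoidHom.comp ((Units.coeHom _).comp ρ)
  have hτ : Function.Injective τ :=
    Matrix.toLinAlgEquiv'.injective.comp (Units.val_injective.comp hρ)
  obtain ⟨Λ, _, hΛ⟩ := exists_isLattice_forall_apply_mem R τ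
  obtain ⟨b⟩ := nonempty_basis_of_isLattice F Λ
  exact ⟨(GeneralLinearGroup.toLin' b).symm.toMonoidHom.comp
    (integralRepresentation τ Λ hΛ).toHomUnits,
    (GeneralLinearGroup.toLin' b).symm.injective.comp
      (.of_comp (f := Units.val) (integralRepresentation_injective hτ Λ hΛ))⟩

theorem BoundedFiniteSubgroups.of_isFractionRing (h : BoundedFiniteSubgroups (GL n R)) :
    BoundedFiniteSubgroups (GL n F) :=
  h.of_forall_exists_injective fun G _ =>
    exists_injective_GL_of_isFractionRing R G.subtype_injective

end FractionRing

section FieldExtension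

theorem BoundedFiniteSubgroups.of_basis {n κ R S : Type*} [Fintype n] [DecidableEq n]
    [Fintype κ] [DecidableEq κ] [CommRing R] [CommRing S] [Algebra R S] (b : Basis κ R S)
    (h : BoundedFiniteSubgroups (GL (n × κ) R)) : BoundedFiniteSubgroups (GL n S) := by
  let restrict : Matrix n n S →+* Matrix (n × κ) (n × κ) R :=
    (compRingEquiv n κ R : _ →+* _).comp (Algebra.leftMulMatrix b).toRingHom.mapMatrix
  have hrestrict : Function.Injective restrict :=
    (compRingEquiv n κ R).injective.comp (map_injective (Algebra.leftMulMatrix_injective b))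
  exact h.of_injective (Units.map restrict) (Units.map_injective hrestrict)

theorem BoundedFiniteSubgroups.of_injective_ringHom {n R S : Type*} [Fintype n] [DecidableEq n]
    [CommRing R] [CommRing S] (h : BoundedFiniteSubgroups (GL n S)) (f : R →+* S)
    (hf : Function.Injective f) : BoundedFiniteSubgroups (GL n R) :=
  h.of_injective (GeneralLinearGroup.map f) (Units.map_injective (map_injective hf))

variable {E L : Type*} [Field E] [CharZero E] [Field L] [Algebra E L]

open IntermediateField in
theorem boundedFiniteSubgroups_GL_adjoin_simple
    (hE : ∀ (n : Type) [Fintype n] [DecidableEq n], BoundedFiniteSubgroups (GL n E)) (x : L)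
    (n : Type) [Fintype n] [DecidableEq n] : BoundedFiniteSubgroups (GL n E⟮x⟯) := by
  by_cases hx : IsAlgebraic E x
  · have := adjoin.finiteDimensional hx.isIntegral
    exact .of_basis (finBasis E E⟮x⟯) (hE _)
  · have hratFunc : BoundedFiniteSubgroups (GL n (RatFunc E)) :=
      .of_isFractionRing (hE n).polynomial
    let e := RatFunc.algEquivOfTranscendental x hx
    exact hratFunc.of_injective_ringHom (e.symm : _ →+* _) e.symm.injective

theorem boundedFiniteSubgroups_GL_of_fg
    (hE : ∀ (n : Type) [Fintype n] [DecidableEq n], BoundedFiniteSubgroups (GL n E))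
    {K : IntermediateField E L} (hK : K.FG) (n : Type) [Fintype n] [DecidableEq n] :
    BoundedFiniteSubgroups (GL n K) := by
  refine IntermediateField.induction_on_adjoin_fg
    (fun K => ∀ (n : Type) [Fintype n] [DecidableEq n], BoundedFiniteSubgroups (GL n K))
    (fun n _ _ => ?_) (fun K x hK => ?_) K hK n
  · let e := IntermediateField.botEquiv E L
    exact (hE n).of_injective_ringHom (e : _ →+* _) e.injective
  · exact boundedFiniteSubgroups_GL_adjoin_simple hK x

end FieldExtension

/-- Minkowski-type theorem: if `K` is a field of characteristic zero that is finitely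
generated over `ℚ`, then finite subgroups of `GL_m(K)` have bounded order. -/
theorem bounded_finite_subgroups_GL_of_finitelyGenerated_over_rat
    (m : ℕ) (hm : 0 < m) (K : Type) [Field K] [CharZero K]
    (hK : ∃ S : Finset K, IntermediateField.adjoin ℚ (S : Set K) = ⊤) :
    ∃ B : ℕ, ∀ G : Subgroup (Matrix.GeneralLinearGroup (Fin m) K),
      Finite G → Nat.card G ≤ B := by
  have hrat (n : Type) [Fintype n] [DecidableEq n] : BoundedFiniteSubgroups (GL n ℚ) :=
    (boundedFiniteSubgroups_GL_int n).of_isFractionRing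
  have htop : BoundedFiniteSubgroups (GL (Fin m) (⊤ : IntermediateField ℚ K)) :=
    boundedFiniteSubgroups_GL_of_fg hrat hK (Fin m)
  let e := (IntermediateField.topEquiv (F := ℚ) (E := K)).symm
  exact htop.of_injective_ringHom (e : K →+* _) e.injective
end

section
/- For every positive integer m there exists a constant B = B(m) such that every finite subgroup G of GL_m(ℤ) has order |G| ≤ B. -/
/-!
Reduction modulo `3` is injective on every finite subgroup of `GL_m(ℤ)`, and more generally of the
units of a ring `R` whose additive group is free of finite rank. Suppose that `a` has prime order
`q` and `a ≡ 1` modulo an odd `N > 1`. Then `(1 + a + ⋯ + a ^ (q - 1)) * (a - 1) = 0`. The first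
factor is congruent to `q` modulo `N`, which is invertible modulo `N` when `q ∤ N`; when `q ∣ N`,
the factor equals `q * (1 + N * t)` for some `t`, because the odd prime `q` divides `q.choose 2`.
Either way some `1 + N * t` annihilates `a - 1`, so `a - 1` is divisible by every power of `N` and
vanishes by Krull's intersection theorem.
-/

section Ring

variable {R : Type*} [Ring R]

lemma exists_geom_sum_one_add_eq (x : R) (n : ℕ) :
    ∃ w : R, ∑ i ∈ Finset.range n, (1 + x) ^ i = n + n.choose 2 * x + x ^ 2 * w := by
  induction n with
  | zero => exact ⟨0, by simp⟩
  | succ n ih =>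
    obtain ⟨w, hw⟩ := ih
    refine ⟨n.choose 2 + w + x * w, ?_⟩
    have hcomm (k : ℕ) : x * k = k * x := (Nat.cast_commute k x).eq.symm
    rw [geom_sum_succ, hw, Nat.choose_succ_succ' n 1, Nat.choose_one_right]
    push_cast
    linear_combination (norm := noncomm_ring) hcomm n - x * hcomm (n.choose 2)

variable {N q : ℕ} {a x t : R}

lemma exists_geom_sum_eq_natCast_add_mul (n : ℕ) (ha : (N : R) ∣ a - 1) :
    ∃ t : R, ∑ i ∈ Finset.range n, a ^ i = n + N * t := by
  obtain ⟨z, hz⟩ := ha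
  obtain ⟨w, hw⟩ := exists_geom_sum_one_add_eq (N * z) n
  refine ⟨n.choose 2 * z + z * (N * z) * w, ?_⟩
  rw [eq_add_of_sub_eq' hz, hw, (Nat.cast_commute _ _).left_comm]
  noncomm_ring

lemma exists_geom_sum_eq_natCast_mul_one_add_mul (hq : Odd q) (hqN : q ∣ N)
    (ha : (N : R) ∣ a - 1) :
    ∃ t : R, ∑ i ∈ Finset.range q, a ^ i = q * (1 + N * t) := by
  obtain ⟨z, hz⟩ := ha
  obtain ⟨w, hw⟩ := exists_geom_sum_one_add_eq (N * z) q
  obtain ⟨c, hc⟩ := hqN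
  obtain ⟨k, hk⟩ := hq
  have hchoose : q.choose 2 = q * k := by
    rw [Nat.choose_two_right, hk, Nat.add_sub_cancel, mul_left_comm,
      Nat.mul_div_cancel_left _ two_pos]
  have hsq : ((N : R) * z) ^ 2 = q * N * (c * z ^ 2) := by
    rw [(Nat.cast_commute N z).mul_pow, sq (N : R)]
    nth_rw 1 [hc]
    rw [Nat.cast_mul, mul_assoc (q : R), (Nat.cast_commute c (N : R)).eq]
    noncomm_ring
  refine ⟨k * z + c * z ^ 2 * w, ?_⟩
  rw [eq_add_of_sub_eq' hz, hw, hsq, hchoose, Nat.cast_mul, mul_assoc (q : R) k,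
    (Nat.cast_commute k (N : R)).left_comm]
  noncomm_ring

lemma mem_span_natCast_smul_top_iff :
    x ∈ Ideal.span {(N : ℤ)} • (⊤ : Submodule ℤ R) ↔ (N : R) ∣ x := by
  rw [Submodule.ideal_span_singleton_smul, Submodule.mem_smul_pointwise_iff_exists]
  simp [dvd_def, eq_comm]

variable [IsHausdorff (Ideal.span {(N : ℤ)}) R]

lemma eq_zero_of_forall_natCast_pow_dvd (h : ∀ k : ℕ, (N : R) ^ k ∣ x) : x = 0 := by
  refine IsHausdorff.haus ‹_› x fun k ↦ ?_
  rw [SModEq.zero, Ideal.span_singleton_pow, ← Nat.cast_pow, mem_span_natCast_smul_top_iff,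
    Nat.cast_pow]
  exact h k

lemma eq_zero_of_one_add_natCast_mul_mul_eq_zero (h : (1 + N * t) * x = 0) : x = 0 := by
  have hx : x = N * (-t * x) := by linear_combination (norm := noncomm_ring) h
  refine eq_zero_of_forall_natCast_pow_dvd (N := N) fun k ↦ ?_
  induction k with
  | zero => simp
  | succ k ih =>
    obtain ⟨y, hy⟩ := ih
    refine ⟨-t * y, ?_⟩
    calc x = N * (-t * (N ^ k * y)) := by rw [← hy, ← hx]
      _ = N ^ (k + 1) * (-t * y) := by
        rw [← ((Nat.cast_commute N (-t)).pow_left k).left_comm, pow_succ', mul_assoc]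

lemma eq_zero_of_natCast_add_natCast_mul_mul_eq_zero (hqN : q.Coprime N)
    (h : (q + N * t) * x = 0) : x = 0 := by
  obtain ⟨u, v, huv⟩ := Nat.isCoprime_iff_coprime.2 hqN
  have hbezout : (u * q + N * v : R) = 1 := by
    rw [(Nat.cast_commute N (v : R)).eq]
    exact mod_cast congrArg (Int.cast : ℤ → R) huv
  refine eq_zero_of_one_add_natCast_mul_mul_eq_zero (N := N) (t := u * t - v) ?_
  calc (1 + N * (u * t - v)) * x = (u * q + N * (u * t)) * x := by rw [← hbezout]; noncomm_ring
    _ = u * ((q + N * t) * x) := by rw [(Nat.cast_commute N (u : R)).left_comm]; noncomm_ring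
    _ = 0 := by rw [h, mul_zero]

variable [Module.IsTorsionFree ℤ R]

lemma eq_one_of_pow_prime_eq_one_of_dvd_sub_one (hN : Odd N) (hq : q.Prime)
    (ha : (N : R) ∣ a - 1) (h : a ^ q = 1) : a = 1 := by
  have hsum : (∑ i ∈ Finset.range q, a ^ i) * (a - 1) = 0 := by rw [geom_sum_mul, h, sub_self]
  rw [← sub_eq_zero]
  by_cases hqN : q ∣ N
  · obtain ⟨t, ht⟩ := exists_geom_sum_eq_natCast_mul_one_add_mul (hN.of_dvd_nat hqN) hqN ha
    rw [ht, mul_assoc, ← Int.cast_natCast, ← zsmul_eq_mul,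
      smul_eq_zero_iff_right (Nat.cast_ne_zero.2 hq.ne_zero)] at hsum
    exact eq_zero_of_one_add_natCast_mul_mul_eq_zero hsum
  · obtain ⟨t, ht⟩ := exists_geom_sum_eq_natCast_add_mul q ha
    exact eq_zero_of_natCast_add_natCast_mul_mul_eq_zero (hq.coprime_iff_not_dvd.2 hqN)
      (ht ▸ hsum)

lemma eq_one_of_isOfFinOrder_of_dvd_sub_one (hN : Odd N) (ha : (N : R) ∣ a - 1)
    (hfin : IsOfFinOrder a) : a = 1 := by
  by_contra hne
  have hq : (orderOf a).minFac.Prime := Nat.minFac_prime (mt orderOf_eq_one_iff.1 hne)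
  have hpow : a ^ (orderOf a / (orderOf a).minFac) = 1 := by
    refine eq_one_of_pow_prime_eq_one_of_dvd_sub_one hN hq ?_ ?_
    · exact ha.trans (sub_one_dvd_pow_sub_one a _)
    · rw [← pow_mul, Nat.div_mul_cancel (Nat.minFac_dvd _), pow_orderOf_eq_one]
  have hdiv_ne_zero : orderOf a / (orderOf a).minFac ≠ 0 :=
    (Nat.div_pos (Nat.minFac_le hfin.orderOf_pos) hq.pos).ne'
  exact pow_ne_one_of_lt_orderOf hdiv_ne_zero
    (Nat.div_lt_self hfin.orderOf_pos hq.one_lt) hpow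

lemma injective_mkQ_units_coe_of_finite (hN : Odd N) (G : Subgroup Rˣ) [Finite G] :
    Function.Injective fun g : G ↦
      (Ideal.span {(N : ℤ)} • (⊤ : Submodule ℤ R)).mkQ ((g : Rˣ) : R) := by
  intro g h hgh
  have hsub : (N : R) ∣ (g : Rˣ) - (h : Rˣ) :=
    mem_span_natCast_smul_top_iff.1 ((Submodule.Quotient.eq _).1 hgh)
  have hdvd : (N : R) ∣ ((g * h⁻¹ : G) : Rˣ) - 1 := by
    simpa [sub_mul] using hsub.mul_right ((h⁻¹ : G) : Rˣ)
  have hfin : IsOfFinOrder (((g * h⁻¹ : G) : Rˣ) : R) :=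
    ((Units.coeHom R).comp G.subtype).isOfFinOrder (isOfFinOrder_of_finite (g * h⁻¹))
  have hone : (((g * h⁻¹ : G) : Rˣ) : R) = 1 := eq_one_of_isOfFinOrder_of_dvd_sub_one hN hdvd hfin
  exact mul_inv_eq_one.1 (Subtype.ext (Units.ext hone))

end Ring

theorem bounded_finite_subgroups_GL_int_general (R : Type*) [Ring R] [Module.Finite ℤ R]
    [Module.IsTorsionFree ℤ R] :
    ∃ B : ℕ, ∀ G : Subgroup Rˣ, Finite G → Nat.card G ≤ B := by
  let I : Ideal ℤ := Ideal.span {((3 : ℕ) : ℤ)}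
  have hI : I ≠ ⊤ := by
    rw [Ne, Ideal.span_singleton_eq_top, Int.isUnit_iff]
    norm_num
  have : IsHausdorff I R := .of_isTorsionFree I R hI
  have : Finite (R ⧸ I • (⊤ : Submodule ℤ R)) :=
    Submodule.finite_quotient_smul I Module.Finite.fg_top
  exact ⟨Nat.card (R ⧸ I • (⊤ : Submodule ℤ R)), fun G _ ↦
    Nat.card_le_card_of_injective _ (injective_mkQ_units_coe_of_finite (by decide) G)⟩

/-- Finite subgroups of `GL_m(ℤ)` have uniformly bounded order. -/
theorem bounded_finite_subgroups_GL_int (m : ℕ) (hm : 0 < m) :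
    ∃ B : ℕ, ∀ G : Subgroup (Matrix.GeneralLinearGroup (Fin m) ℤ),
      Finite G → Nat.card G ≤ B :=
  bounded_finite_subgroups_GL_int_general (Matrix (Fin m) (Fin m) ℤ)
end

section
/- Let k be a field of characteristic zero that is finitely generated as a field extension of ℚ, and let N be a positive integer. Then there exists a constant B = B(k, N) such that for every field extension K of k which is finitely generated as a field over k and in which k is algebraically closed (i.e., every element of K that is algebraic over k lies in the image of k), every finite subgroup G of GL_N(K) has order |G| ≤ B. -/
/-!
Let `d` be the degree over `ℚ` of the algebraic closure of `ℚ` in `K`. An eigenvalue of an element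
of finite order of `GL_N(K)` is a root of unity of degree at most `d * N` over `ℚ`, so its order
divides `(2 * d * N)!` and only boundedly many traces occur. A finite group of matrices in
characteristic zero is determined by traces: `g` is recovered from the numbers `tr (g * c i)`, where
the `c i` are at most `N ^ 2` elements of the group spanning its linear span. This bounds the order
in terms of `d` and `N`.

If `k` is algebraically closed in `K`, then `k` and `K` contain the same algebraic numbers, so `d`
only depends on `k`. It is finite for finitely generated `k`: the algebraic numbers in `k` are
linearly disjoint from a purely transcendental subfield over which `k` is finite.
-/

open Module Polynomial

section RelativeAlgebraicClosure

variable {F E : Type*} [Field F] [Field E] [Algebra F E]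

theorem linearDisjoint_adjoin_of_algebraicIndependent {ι : Type*} {x : ι → E}
    (hx : AlgebraicIndependent F x) (A : IntermediateField F E) [Algebra.IsAlgebraic F A] :
    A.toSubalgebra.LinearDisjoint (Algebra.adjoin F (Set.range x)) := by
  let monomials := (MvPolynomial.basisMonomials ι F).map hx.aevalEquiv.toLinearEquiv
  refine .of_basis_right _ _ monomials ?_
  have hxA : AlgebraicIndependent A x := hx.extendScalars A
  convert! (MvPolynomial.basisMonomials ι A).linearIndependent.map'
    (MvPolynomial.aeval x).toLinearMap (LinearMap.ker_eq_bot.mpr hxA) using 1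
  ext m
  simp [monomials, MvPolynomial.aeval_monomial]

open scoped IntermediateField.algebraAdjoinAdjoin in
theorem linearIndependent_adjoin_of_algebraicIndependent {ι κ : Type*} {x : ι → E}
    (hx : AlgebraicIndependent F x) {A : IntermediateField F E} [Algebra.IsAlgebraic F A]
    {a : κ → A} (ha : LinearIndependent F a) :
    LinearIndependent (IntermediateField.adjoin F (Set.range x)) (A.val ∘ a) :=
  (LinearIndependent.iff_fractionRing (Algebra.adjoin F (Set.range x)) _).mp <|
    (linearDisjoint_adjoin_of_algebraicIndependent hx A).linearIndependent_left_of_flat ha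

variable (F E) in
theorem finiteDimensional_algebraicClosure_of_essFiniteType [Algebra.EssFiniteType F E] :
    FiniteDimensional F (algebraicClosure F E) := by
  obtain ⟨s, hs⟩ := exists_isTranscendenceBasis F E
  let F' := IntermediateField.adjoin F (Set.range ((↑) : s → E))
  have : Algebra.IsAlgebraic F' E := hs.isAlgebraic_field
  have : Algebra.EssFiniteType F' E := .of_comp F F' E
  have : FiniteDimensional F' E := Algebra.finite_of_essFiniteType_of_isAlgebraic
  let b := Basis.ofVectorSpace F (algebraicClosure F E)
  have := (linearIndependent_adjoin_of_algebraicIndependent hs.1 b.linearIndependent).finite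
  exact .of_basis b

/-- The identification of the relative algebraic closures of `F` in `E` and in an extension `K` of
`E` in which `E` is algebraically closed; it is the restriction of the inclusion of `E` into `K`. -/
noncomputable def algebraicClosureEquivOfEqBot {K : Type*} [Field K] [Algebra F K] [Algebra E K]
    [IsScalarTower F E K] (h : algebraicClosure E K = ⊥) :
    algebraicClosure F E ≃ₐ[F] algebraicClosure F K :=
  (IntermediateField.equivMap _ (IsScalarTower.toAlgHom F E K)).trans <|
    IntermediateField.equivOfEq (algebraicClosure.map_eq_of_algebraicClosure_eq_bot F h)

variable {L : Type*} [Field L] [Algebra F L] [Algebra E L] [IsScalarTower F E L]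

theorem minpoly_algebraicClosure_map_eq {z : L} (hz : IsIntegral F z) :
    (minpoly (algebraicClosure F E) z).map (algebraMap (algebraicClosure F E) E) =
      minpoly E z := by
  refine minpoly.map_algebraMap hz.tower_top <| (lifts_iff_coeff_lifts _).mpr fun n ↦ ?_
  have hcoeff : IsIntegral F ((minpoly E z).coeff n) :=
    isIntegral_coeff_of_dvd _ _ (minpoly.monic hz) (minpoly.monic hz.tower_top)
      (minpoly.dvd_map_of_isScalarTower F E z) n
  exact ⟨⟨_, mem_algebraicClosure_iff'.mpr hcoeff⟩, rfl⟩

theorem natDegree_minpoly_le_finrank_mul [FiniteDimensional F E] {z : L} (hz : IsIntegral E z) :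
    (minpoly F z).natDegree ≤ finrank F E * (minpoly E z).natDegree := by
  have := IntermediateField.adjoin.finiteDimensional hz
  have : FiniteDimensional F (IntermediateField.adjoin E {z}) := .trans F E _
  have : IsScalarTower F (IntermediateField.adjoin E {z}) L := .to₁₃₄ F E _ L
  calc (minpoly F z).natDegree
      = (minpoly F (IntermediateField.AdjoinSimple.gen E z)).natDegree := by
        rw [← minpoly.algebraMap_eq (algebraMap (IntermediateField.adjoin E {z}) L).injective,
          IntermediateField.AdjoinSimple.algebraMap_gen]
    _ ≤ finrank F (IntermediateField.adjoin E {z}) := minpoly.natDegree_le _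
    _ = finrank F E * (minpoly E z).natDegree := by
        rw [← IntermediateField.adjoin.finrank hz, finrank_mul_finrank]

theorem natDegree_minpoly_le_finrank_algebraicClosure_mul
    [FiniteDimensional F (algebraicClosure F E)] {z : L} (hz : IsIntegral F z) :
    (minpoly F z).natDegree ≤
      finrank F (algebraicClosure F E) * (minpoly E z).natDegree := by
  rw [← minpoly_algebraicClosure_map_eq (E := E) hz, natDegree_map]
  exact natDegree_minpoly_le_finrank_mul hz.tower_top

end RelativeAlgebraicClosure

section RootsOfUnity

open Nat

theorem dvd_factorial_two_mul_of_totient_le {n D : ℕ} (hn : n ≠ 0) (h : φ n ≤ D) :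
    n ∣ (2 * D)! := by
  rw [Nat.dvd_iff_prime_pow_dvd_dvd]
  rintro p (_ | i) hp hpn
  · simp
  refine Nat.dvd_factorial (pow_pos hp.pos _) ?_
  have totient_le : p ^ i * (p - 1) ≤ D := by
    rw [← totient_prime_pow_succ hp]
    exact (Nat.le_of_dvd (totient_pos.mpr hn.pos) (totient_dvd_of_dvd hpn)).trans h
  calc p ^ (i + 1) = p ^ i * p := pow_succ _ _
    _ ≤ p ^ i * (2 * (p - 1)) := by gcongr; have := hp.two_le; omega
    _ = 2 * (p ^ i * (p - 1)) := by ring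
    _ ≤ 2 * D := by gcongr

theorem pow_factorial_eq_one_of_natDegree_minpoly_le {L : Type*} [Field L] [CharZero L] {z : L}
    (hz : IsOfFinOrder z) {D : ℕ} (h : (minpoly ℚ z).natDegree ≤ D) : z ^ (2 * D)! = 1 := by
  rw [← cyclotomic_eq_minpoly_rat (.orderOf z) hz.orderOf_pos, natDegree_cyclotomic] at h
  exact orderOf_dvd_iff_pow_eq_one.mp
    (dvd_factorial_two_mul_of_totient_le hz.orderOf_pos.ne' h)

end RootsOfUnity

section Eigenvalues

variable {K L V : Type*} [Field K] [Field L] [Algebra K L]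
  [AddCommGroup V] [Module K V] [FiniteDimensional K V]

theorem pow_eq_one_of_mem_aroots_charpoly {f : End K V} {m : ℕ} (hf : f ^ m = 1) {z : L}
    (hz : z ∈ f.charpoly.aroots L) : z ^ m = 1 := by
  have hroot : (f.baseChange L).charpoly.IsRoot z := by
    rw [LinearMap.charpoly_baseChange]
    exact isRoot_of_mem_roots hz
  obtain ⟨v, hv⟩ := ((End.hasEigenvalue_iff_isRoot_charpoly _ z).mpr hroot).exists_hasEigenvector
  have hfm : f.baseChange L ^ m = 1 := by
    rw [← LinearMap.baseChange_pow, hf, LinearMap.baseChange_one]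
  have hvm := hv.pow_apply m
  rw [hfm, End.one_apply] at hvm
  exact (smul_left_injective L hv.2 <| by simpa using hvm).symm

theorem algebraMap_trace_eq_sum_aroots_charpoly [IsAlgClosed L] (f : End K V) :
    algebraMap K L (LinearMap.trace K V f) = (f.charpoly.aroots L).sum := by
  rw [← LinearMap.trace_baseChange,
    End.trace_eq_sum_roots_charpoly_of_splits (IsAlgClosed.splits _), LinearMap.charpoly_baseChange]

theorem exists_sym_sum_eq_algebraMap_trace [IsAlgClosed L] {f : End K V} {μ : Set L}
    (hf : ∀ z ∈ f.charpoly.aroots L, z ∈ μ) :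
    ∃ s : Sym μ (finrank K V),
      ((s : Multiset μ).map (↑)).sum = algebraMap K L (LinearMap.trace K V f) := by
  have hcard : (f.charpoly.aroots L).card = finrank K V := by
    rw [← (IsAlgClosed.splits _).natDegree_eq_card_roots, natDegree_map,
      LinearMap.charpoly_natDegree]
  rw [algebraMap_trace_eq_sum_aroots_charpoly]
  generalize f.charpoly.aroots L = roots at hf hcard
  lift roots to Multiset μ using hf
  exact ⟨⟨roots, by simpa using hcard⟩, rfl⟩

theorem natDegree_minpoly_le_finrank_of_mem_aroots_charpoly {f : End K V} {z : L}
    (hz : z ∈ f.charpoly.aroots L) : (minpoly K z).natDegree ≤ finrank K V := by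
  rw [← f.charpoly_natDegree]
  exact natDegree_le_of_dvd (minpoly.dvd K z (mem_aroots.mp hz).2) f.charpoly_monic.ne_zero

open Nat in
theorem pow_factorial_eq_one_of_mem_aroots_charpoly [CharZero K] [CharZero L]
    [FiniteDimensional ℚ (algebraicClosure ℚ K)] {f : End K V} (hf : IsOfFinOrder f) {z : L}
    (hz : z ∈ f.charpoly.aroots L) :
    z ^ (2 * (finrank ℚ (algebraicClosure ℚ K) * finrank K V))! = 1 := by
  obtain ⟨m, hm, hfm⟩ := isOfFinOrder_iff_pow_eq_one.mp hf
  have hzm : z ^ m = 1 := pow_eq_one_of_mem_aroots_charpoly hfm hz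
  have hint : IsIntegral ℚ z := .of_pow hm (hzm ▸ isIntegral_one)
  refine pow_factorial_eq_one_of_natDegree_minpoly_le
    (isOfFinOrder_iff_pow_eq_one.mpr ⟨m, hm, hzm⟩) ?_
  exact (natDegree_minpoly_le_finrank_algebraicClosure_mul hint).trans <|
    Nat.mul_le_mul_left _ (natDegree_minpoly_le_finrank_of_mem_aroots_charpoly hz)

end Eigenvalues

section Characters

variable {K G V : Type*} [Field K] [AddCommGroup V] [Module K V]

theorem character_mul_eq_of_span_eq [Monoid G] {ρ : Representation K G V} {ι : Type*} {c : ι → G}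
    (hc : Submodule.span K (Set.range (ρ ∘ c)) = Submodule.span K (Set.range ρ)) {g h : G}
    (hgh : ∀ i, ρ.character (g * c i) = ρ.character (h * c i)) (x : G) :
    ρ.character (g * x) = ρ.character (h * x) := by
  let traceMul (g : G) : End K V →ₗ[K] K := LinearMap.trace K V ∘ₗ LinearMap.mulLeft K (ρ g)
  have traceMul_apply (g x : G) : traceMul g (ρ x) = ρ.character (g * x) := by
    simp [traceMul, Representation.character]
  have heq : Set.EqOn (traceMul g) (traceMul h) (Submodule.span K (Set.range (ρ ∘ c))) := by
    refine LinearMap.eqOn_span' ?_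
    rintro _ ⟨i, rfl⟩
    simpa [traceMul_apply] using hgh i
  rw [← traceMul_apply, ← traceMul_apply]
  exact heq (hc ▸ Submodule.subset_span ⟨x, rfl⟩)

/-- The elements by which the argument of the character of `ρ` may be translated. For finite `G`
in characteristic zero this is the kernel of `ρ`, but it only refers to traces. -/
def characterStabilizer [Group G] (ρ : Representation K G V) : Subgroup G where
  carrier := {u | ∀ x, ρ.character (u * x) = ρ.character x}
  one_mem' x := by rw [one_mul]
  mul_mem' hu hv x := by rw [mul_assoc, hu, hv]
  inv_mem' {u} hu x := by rw [← hu, mul_inv_cancel_left]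

variable [FiniteDimensional K V]

theorem eq_one_of_character_eq_finrank [Group G] [Finite G] [CharZero K]
    (ρ : Representation K G V) (h : ∀ g, ρ.character g = finrank K V) (g : G) : ρ g = 1 := by
  have := Fintype.ofFinite G
  have hG : (Nat.card G : K) ≠ 0 := Nat.cast_ne_zero.mpr Nat.card_pos.ne'
  have := invertibleOfNonzero hG
  have finrank_invariants : finrank K ρ.invariants = finrank K V := by
    have := ρ.card_inv_mul_sum_char_eq_finrank
    simp only [h, Finset.sum_const, Finset.card_univ, Fintype.card_eq_nat_card, nsmul_eq_mul,
      inv_mul_cancel_left₀ hG] at this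
    exact_mod_cast this.symm
  ext v
  exact (Submodule.eq_top_of_finrank_eq finrank_invariants ▸ Submodule.mem_top : v ∈ ρ.invariants) g

theorem eq_one_of_mem_characterStabilizer [Group G] [Finite G] [CharZero K]
    {ρ : Representation K G V} {u : G} (hu : u ∈ characterStabilizer ρ) : ρ u = 1 := by
  refine eq_one_of_character_eq_finrank (ρ.comp (characterStabilizer ρ).subtype) ?_ ⟨u, hu⟩
  rintro ⟨v, hv⟩
  exact (congrArg ρ.character (mul_one v)).symm.trans ((hv 1).trans ρ.char_one)

theorem eq_of_character_mul_eq [Group G] [Finite G] [CharZero K] {ρ : Representation K G V}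
    {g h : G} (hgh : ∀ x, ρ.character (g * x) = ρ.character (h * x)) : ρ g = ρ h := by
  have hmem : g * h⁻¹ ∈ characterStabilizer ρ := fun x ↦ by
    rw [mul_assoc, hgh, mul_inv_cancel_left]
  calc ρ g = ρ (g * h⁻¹) * ρ h := by rw [← map_mul, inv_mul_cancel_right]
    _ = ρ h := by rw [eq_one_of_mem_characterStabilizer hmem, one_mul]

theorem natCard_le_natCard_range_character_pow [Group G] [Finite G] [CharZero K]
    {ρ : Representation K G V} (hρ : Function.Injective ρ) :
    Nat.card G ≤ Nat.card (Set.range ρ.character) ^ finrank K V ^ 2 := by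
  let A := Submodule.span K (Set.range ρ)
  obtain ⟨b, hb, hspan, -⟩ := Submodule.exists_fun_fin_finrank_span_eq K (Set.range ρ)
  choose c hc using hb
  obtain rfl : ρ ∘ c = b := funext hc
  let translatedTraces (g : G) (i : Fin (finrank K A)) : Set.range ρ.character :=
    ⟨ρ.character (g * c i), Set.mem_range_self _⟩
  have translatedTraces_injective : Function.Injective translatedTraces := fun g h hgh ↦
    hρ <| eq_of_character_mul_eq <| character_mul_eq_of_span_eq hspan fun i ↦
      congrArg Subtype.val (congrFun hgh i)
  have finrank_le : finrank K A ≤ finrank K V ^ 2 := by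
    simpa [finrank_linearMap, sq] using A.finrank_le
  calc Nat.card G
      ≤ Nat.card (Fin (finrank K A) → Set.range ρ.character) :=
        Nat.card_le_card_of_injective _ translatedTraces_injective
    _ = Nat.card (Set.range ρ.character) ^ finrank K A := by rw [Nat.card_fun, Nat.card_fin]
    _ ≤ Nat.card (Set.range ρ.character) ^ finrank K V ^ 2 :=
        Nat.pow_le_pow_right Nat.card_pos finrank_le

theorem natCard_range_character_le_multichoose [Monoid G] {L : Type*} [Field L] [IsAlgClosed L]
    [Algebra K L] {ρ : Representation K G V} {μ : Set L} [Finite μ]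
    (hμ : ∀ g, ∀ z ∈ (ρ g).charpoly.aroots L, z ∈ μ) :
    Nat.card (Set.range ρ.character) ≤ (Nat.card μ).multichoose (finrank K V) := by
  have sum_of_eigenvalues (t : Set.range ρ.character) :
      ∃ s : Sym μ (finrank K V), ((s : Multiset μ).map (↑)).sum = algebraMap K L t := by
    obtain ⟨_, g, rfl⟩ := t
    exact exists_sym_sum_eq_algebraMap_trace (hμ g)
  choose eigenvalues eigenvalues_sum using sum_of_eigenvalues
  have eigenvalues_injective : Function.Injective eigenvalues := fun t t' h ↦
    Subtype.ext <| (algebraMap K L).injective <| by rw [← eigenvalues_sum, h, eigenvalues_sum]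
  rw [← Sym.natCard_sym_eq_multichoose]
  exact Nat.card_le_card_of_injective _ eigenvalues_injective

end Characters

section FiniteLinearGroups

open Nat

variable {K : Type*} [Field K] [CharZero K] [FiniteDimensional ℚ (algebraicClosure ℚ K)]

theorem natCard_range_character_le_multichoose_factorial {G V : Type*} [Group G] [Finite G]
    [AddCommGroup V] [Module K V] [FiniteDimensional K V] (ρ : Representation K G V) :
    Nat.card (Set.range ρ.character) ≤
      (2 * (finrank ℚ (algebraicClosure ℚ K) * finrank K V))!.multichoose (finrank K V) := by
  let L := AlgebraicClosure K
  have : CharZero L := charZero_of_injective_algebraMap (algebraMap K L).injective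
  let M := (2 * (finrank ℚ (algebraicClosure ℚ K) * finrank K V))!
  have : NeZero M := ⟨factorial_ne_zero _⟩
  obtain ⟨ζ, hζ⟩ := HasEnoughRootsOfUnity.exists_primitiveRoot L M
  let μ : Set L := nthRootsFinset M (1 : L)
  have card_μ : Nat.card μ = M := by
    simp [μ, hζ.card_nthRootsFinset]
  have eigenvalue_mem (g : G) (z : L) (hz : z ∈ (ρ g).charpoly.aroots L) : z ∈ μ :=
    (mem_nthRootsFinset (NeZero.pos M) _).mpr <|
      pow_factorial_eq_one_of_mem_aroots_charpoly (ρ.isOfFinOrder (isOfFinOrder_of_finite g)) hz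
  simpa only [card_μ] using natCard_range_character_le_multichoose eigenvalue_mem

theorem natCard_le_of_injective_representation {G V : Type*} [Group G] [Finite G]
    [AddCommGroup V] [Module K V] [FiniteDimensional K V] {ρ : Representation K G V}
    (hρ : Function.Injective ρ) :
    Nat.card G ≤ (2 * (finrank ℚ (algebraicClosure ℚ K) * finrank K V))!.multichoose
      (finrank K V) ^ finrank K V ^ 2 :=
  (natCard_le_natCard_range_character_pow hρ).trans <|
    Nat.pow_le_pow_left (natCard_range_character_le_multichoose_factorial ρ) _

theorem natCard_subgroup_generalLinearGroup_le {n : Type*} [Fintype n] [DecidableEq n]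
    (G : Subgroup (Matrix.GeneralLinearGroup n K)) [Finite G] :
    Nat.card G ≤ (2 * (finrank ℚ (algebraicClosure ℚ K) * Fintype.card n))!.multichoose
      (Fintype.card n) ^ Fintype.card n ^ 2 := by
  let ρ : Representation K G (n → K) :=
    (Matrix.toLinAlgEquiv' : Matrix n n K ≃ₐ[K] _).toMonoidHom.comp
      ((Units.coeHom (Matrix n n K)).comp G.subtype)
  have hρ : Function.Injective ρ :=
    Matrix.toLinAlgEquiv'.injective.comp (Units.val_injective.comp Subtype.val_injective)
  simpa only [finrank_fintype_fun_eq_card] using natCard_le_of_injective_representation hρ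

end FiniteLinearGroups

open Nat in
theorem uniformly_bounded_finite_subgroups_GL_general
    (k : Type*) [Field k] [CharZero k] [FiniteDimensional ℚ (algebraicClosure ℚ k)]
    (n : Type*) [Fintype n] [DecidableEq n] :
    ∃ B : ℕ, ∀ (K : Type*) [Field K] [Algebra k K], algebraicClosure k K = ⊥ →
      ∀ G : Subgroup (Matrix.GeneralLinearGroup n K), Finite G → Nat.card G ≤ B := by
  refine ⟨(2 * (finrank ℚ (algebraicClosure ℚ k) * Fintype.card n))!.multichoose
    (Fintype.card n) ^ Fintype.card n ^ 2, fun K _ _ hkK G _ ↦ ?_⟩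
  have : CharZero K := charZero_of_injective_algebraMap (algebraMap k K).injective
  let e : algebraicClosure ℚ k ≃ₗ[ℚ] algebraicClosure ℚ K :=
    (algebraicClosureEquivOfEqBot hkK).toLinearEquiv
  have : FiniteDimensional ℚ (algebraicClosure ℚ K) := e.finiteDimensional
  rw [e.finrank_eq]
  exact natCard_subgroup_generalLinearGroup_le G

/-- Lemma 7.1: for `k` finitely generated over `ℚ`, the finite subgroups of `GL_N(K)`
are uniformly bounded as `K` ranges over finitely generated extensions of `k` in which
`k` is algebraically closed. -/
theorem uniformly_bounded_finite_subgroups_GL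
    (k : Type) [Field k] [CharZero k]
    (hk : ∃ S : Finset k, IntermediateField.adjoin ℚ (S : Set k) = ⊤)
    (N : ℕ) (hN : 0 < N) :
    ∃ B : ℕ, ∀ (K : Type) [Field K] [Algebra k K],
      (∃ S : Finset K, IntermediateField.adjoin k (S : Set K) = ⊤) →
      (∀ x : K, IsAlgebraic k x → ∃ y : k, algebraMap k K y = x) →
      ∀ G : Subgroup (Matrix.GeneralLinearGroup (Fin N) K),
        Finite G → Nat.card G ≤ B := by
  have : Algebra.EssFiniteType ℚ k := IntermediateField.fg_top_iff.mp hk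
  have := finiteDimensional_algebraicClosure_of_essFiniteType ℚ k
  obtain ⟨B, hB⟩ := uniformly_bounded_finite_subgroups_GL_general k (Fin N)
  exact ⟨B, fun K _ _ _ hkK ↦ hB K <| le_bot_iff.mp fun x hx ↦
    IntermediateField.mem_bot.mpr <| hkK x (mem_algebraicClosure_iff.mp hx)⟩
end

section
/- Let k be a field of characteristic zero that is finitely generated as a field extension of ℚ, and let N be a positive integer. Then there exists a constant C = C(k, N) such that for every field extension K of k in which k is algebraically closed (every element of K algebraic over k lies in the image of k), every element g ∈ GL_N(K) of finite order has order at most C. -/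
/-!
An eigenvalue `z` of `g` is a root of unity of degree at most `N` over `K`. Let `A` be the algebraic
closure of `ℚ` in `k`; it is algebraically closed in `K`, so the minimal polynomial of `z` over `K`
already has coefficients in `A`, and `z` has degree at most `[A : ℚ] * N` over `ℚ`. That degree is
`φ (orderOf z)`, and `n` divides `(2 * φ n)!`, so the order of every eigenvalue divides
`(2 * ([A : ℚ] * N))!`. As `g` is diagonalizable over an algebraic closure of `K`, so does its own
order.

The degree `[A : ℚ]` is finite because a transcendence basis `x` of `k` over `ℚ` stays algebraically
independent over `A`: a `ℚ`-basis of `A` is then linearly independent over `ℚ(x)`, and `k` is finite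
over `ℚ(x)`.
-/

open Module Polynomial
open scoped Nat IntermediateField.algebraAdjoinAdjoin

theorem dvd_factorial_two_mul_totient {n : ℕ} (hn : 0 < n) : n ∣ (2 * φ n)! := by
  rw [Nat.dvd_iff_prime_pow_dvd_dvd]
  rintro p (_ | e) hp hpn
  · simp
  have two_mul_pred : p ≤ 2 * (p - 1) := by have := hp.two_le; lia
  have totient_le : p ^ e * (p - 1) ≤ φ n := by
    rw [← Nat.totient_prime_pow_succ hp]
    exact Nat.le_of_dvd (Nat.totient_pos.2 hn) (Nat.totient_dvd_of_dvd hpn)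
  refine Nat.dvd_factorial (pow_pos hp.pos _) ?_
  calc p ^ (e + 1) = p ^ e * p := pow_succ p e
    _ ≤ p ^ e * (2 * (p - 1)) := by gcongr
    _ = 2 * (p ^ e * (p - 1)) := by ring
    _ ≤ 2 * φ n := by gcongr

theorem linearDisjoint_adjoin_range_of_algebraicIndependent {R S ι : Type*} [CommRing R]
    [CommRing S] [Algebra R S] {A : Subalgebra R S} [FaithfulSMul R A] {x : ι → S}
    (hx : AlgebraicIndependent A x) : A.LinearDisjoint (Algebra.adjoin R (Set.range x)) := by
  have hxR : AlgebraicIndependent R x :=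
    hx.restrictScalars (FaithfulSMul.algebraMap_injective R A)
  let b := (MvPolynomial.basisMonomials ι R).map hxR.aevalEquiv.toLinearEquiv
  refine .of_basis_right A _ b ?_
  convert! (MvPolynomial.basisMonomials ι A).linearIndependent.map'
    (MvPolynomial.aeval x).toLinearMap (LinearMap.ker_eq_bot.2 hx) using 1
  ext m
  simp [b, MvPolynomial.aeval_monomial]

instance finiteDimensional_algebraicClosure (F E : Type*) [Field F] [Field E] [Algebra F E]
    [Algebra.EssFiniteType F E] : FiniteDimensional F (algebraicClosure F E) := by
  obtain ⟨s, hs⟩ := exists_isTranscendenceBasis F E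
  let F' := IntermediateField.adjoin F (Set.range ((↑) : s → E))
  have : Algebra.IsAlgebraic F' E := hs.isAlgebraic_field
  have : Algebra.EssFiniteType F' E := .of_comp F F' E
  have : FiniteDimensional F' E := Algebra.finite_of_essFiniteType_of_isAlgebraic
  let b := Basis.ofVectorSpace F (algebraicClosure F E)
  have disjoint : (algebraicClosure F E).toSubalgebra.LinearDisjoint
      (Algebra.adjoin F (Set.range ((↑) : s → E))) :=
    linearDisjoint_adjoin_range_of_algebraicIndependent hs.1.algebraicClosure
  have indep : LinearIndependent F' (fun i ↦ (b i : E)) :=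
    (disjoint.linearIndependent_left_of_flat b.linearIndependent).localization F'
      (nonZeroDivisors (Algebra.adjoin F (Set.range ((↑) : s → E))))
  have := indep.finite
  exact b.finiteDimensional_of_finite

theorem map_minpoly_of_isIntegrallyClosedIn {A : Type*} (K : Type*) {B : Type*} [CommRing A]
    [Field K] [Ring B] [Algebra A K] [Algebra K B] [Algebra A B] [IsScalarTower A K B]
    [IsIntegrallyClosedIn A K] {x : B} (hx : IsIntegral A x) :
    (minpoly A x).map (algebraMap A K) = minpoly K x := by
  have monic_K : (minpoly K x).Monic := minpoly.monic hx.tower_top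
  have mem_lifts : minpoly K x ∈ lifts (algebraMap A K) := by
    rw [lifts_iff_coeff_lifts]
    intro i
    exact IsIntegrallyClosedIn.isIntegral_iff.1 <| isIntegral_coeff_of_dvd (minpoly A x) _
      (minpoly.monic hx) monic_K (minpoly.dvd_map_of_isScalarTower A K x) i
  obtain ⟨p, map_p, -, monic_p⟩ := lifts_and_natDegree_eq_and_monic mem_lifts monic_K
  have aeval_p : aeval x p = 0 := by rw [← aeval_map_algebraMap K, map_p, minpoly.aeval]
  refine eq_of_monic_of_dvd_of_natDegree_le monic_K ((minpoly.monic hx).map _)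
    (minpoly.dvd_map_of_isScalarTower A K x) ?_
  rw [(minpoly.monic hx).natDegree_map, ← map_p, monic_p.natDegree_map]
  exact natDegree_le_natDegree (minpoly.min A x monic_p aeval_p)

theorem natDegree_minpoly_le_finrank_mul_s4 (F A : Type*) {L : Type*} [Field F] [Field A] [Field L]
    [Algebra F A] [Algebra A L] [Algebra F L] [IsScalarTower F A L] [FiniteDimensional F A]
    {x : L} (hx : IsIntegral A x) :
    (minpoly F x).natDegree ≤ finrank F A * (minpoly A x).natDegree := by
  let M := IntermediateField.adjoin A {x}
  have : FiniteDimensional A M := IntermediateField.adjoin.finiteDimensional hx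
  have : FiniteDimensional F M := Module.Finite.trans A M
  let gen : M := IntermediateField.AdjoinSimple.gen A x
  calc (minpoly F x).natDegree = (minpoly F gen).natDegree := by
        rw [← minpoly.algHom_eq (M.val.restrictScalars F) M.val.injective]
        rfl
    _ ≤ finrank F M := minpoly.natDegree_le _
    _ = finrank F A * (minpoly A x).natDegree := by
        rw [← finrank_mul_finrank F A M, IntermediateField.adjoin.finrank hx]

theorem dvd_of_separable_of_forall_aeval_eq_zero {K : Type*} (Ω : Type*) [Field K] [Field Ω]
    [Algebra K Ω] [IsAlgClosed Ω] {p q : K[X]} (hp : p.Separable)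
    (h : ∀ z : Ω, aeval z p = 0 → aeval z q = 0) : p ∣ q := by
  rcases eq_or_ne q 0 with rfl | hq
  · exact dvd_zero p
  rw [← map_dvd_map' (algebraMap K Ω), (IsAlgClosed.splits _).dvd_iff_roots_le_roots
    (map_ne_zero hp.ne_zero) (map_ne_zero hq), Multiset.le_iff_subset (nodup_roots hp.map)]
  intro z hz
  rw [mem_roots_map hp.ne_zero] at hz
  rw [mem_roots_map hq]
  exact h z hz

section

variable (A K : Type*) [Field A] [Algebra ℚ A] [FiniteDimensional ℚ A]
  [Field K] [Algebra A K] [IsIntegrallyClosedIn A K]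

theorem totient_orderOf_le_finrank_mul_natDegree_minpoly {L : Type*} [Field L] [Algebra K L] {z : L}
    (hz : IsOfFinOrder z) :
    φ (orderOf z) ≤ finrank ℚ A * (minpoly K z).natDegree := by
  let _ : Algebra A L := ((algebraMap K L).comp (algebraMap A K)).toAlgebra
  have : IsScalarTower A K L := .of_algebraMap_eq' rfl
  have : CharZero L :=
    charZero_of_injective_ringHom ((algebraMap A L).comp (algebraMap ℚ A)).injective
  have integral : IsIntegral A z := by
    refine .of_pow hz.orderOf_pos ?_
    rw [pow_orderOf_eq_one]
    exact isIntegral_one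
  calc φ (orderOf z) = (minpoly ℚ z).natDegree := by
        rw [← cyclotomic_eq_minpoly_rat (.orderOf z) hz.orderOf_pos, natDegree_cyclotomic]
    _ ≤ finrank ℚ A * (minpoly A z).natDegree := natDegree_minpoly_le_finrank_mul_s4 ℚ A integral
    _ = finrank ℚ A * (minpoly K z).natDegree := by
        rw [← map_minpoly_of_isIntegrallyClosedIn K integral,
          (minpoly.monic integral).natDegree_map]

theorem orderOf_dvd_factorial_finrank_mul_natDegree_minpoly {B : Type*} [Ring B] [Algebra K B]
    {b : B} (hb : IsOfFinOrder b) :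
    orderOf b ∣ (2 * (finrank ℚ A * (minpoly K b).natDegree))! := by
  have : CharZero K :=
    charZero_of_injective_ringHom ((algebraMap A K).comp (algebraMap ℚ A)).injective
  set T := (2 * (finrank ℚ A * (minpoly K b).natDegree))!
  have dvd_order : minpoly K b ∣ X ^ orderOf b - 1 :=
    minpoly.dvd K b (by simp [pow_orderOf_eq_one])
  have separable : (minpoly K b).Separable :=
    (X_pow_sub_one_separable_iff.2 (Nat.cast_ne_zero.2 hb.orderOf_pos.ne')).of_dvd dvd_order
  suffices minpoly K b ∣ X ^ T - 1 by
    have := aeval_eq_zero_of_dvd_aeval_eq_zero this (minpoly.aeval K b)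
    exact orderOf_dvd_of_pow_eq_one (by simpa [sub_eq_zero] using this)
  refine dvd_of_separable_of_forall_aeval_eq_zero (AlgebraicClosure K) separable fun z hz ↦ ?_
  have pow_z : z ^ orderOf b = 1 := by
    simpa [sub_eq_zero] using aeval_eq_zero_of_dvd_aeval_eq_zero dvd_order hz
  have finite_z : IsOfFinOrder z :=
    isOfFinOrder_iff_pow_eq_one.2 ⟨orderOf b, hb.orderOf_pos, pow_z⟩
  have dvd_T : orderOf z ∣ T := by
    refine (dvd_factorial_two_mul_totient finite_z.orderOf_pos).trans
      (Nat.factorial_dvd_factorial ?_)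
    grw [totient_orderOf_le_finrank_mul_natDegree_minpoly A K finite_z,
      natDegree_le_of_dvd (minpoly.dvd K z hz) separable.ne_zero]
  simp [orderOf_dvd_iff_pow_eq_one.1 dvd_T]

end

theorem bounded_order_of_finite_order_elements_GL_general {k K n : Type*} [Field k] [CharZero k]
    [FiniteDimensional ℚ (algebraicClosure ℚ k)] [Field K] [Algebra k K] [Fintype n] [DecidableEq n]
    (hK : ∀ x : K, IsAlgebraic k x → ∃ y : k, algebraMap k K y = x)
    {g : Matrix.GeneralLinearGroup n K} (hg : IsOfFinOrder g) :
    orderOf g ∣ (2 * (finrank ℚ (algebraicClosure ℚ k) * Fintype.card n))! := by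
  let A := algebraicClosure ℚ k
  have : CharZero K := charZero_of_injective_algebraMap (algebraMap k K).injective
  have : IsIntegrallyClosedIn k K :=
    isIntegrallyClosedIn_iff.2 ⟨(algebraMap k K).injective, fun hx ↦ hK _ hx.isAlgebraic⟩
  have : IsIntegralClosure A ℚ K := .of_isIntegralClosure_of_isIntegrallyClosedIn ℚ A k K
  have : IsIntegrallyClosedIn A K := .of_isIntegralClosure ℚ
  have natDegree_le : (minpoly K g.val).natDegree ≤ Fintype.card n := by
    rw [← g.val.charpoly_natDegree_eq_dim]
    exact natDegree_le_of_dvd g.val.minpoly_dvd_charpoly g.val.charpoly_monic.ne_zero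
  calc orderOf g = orderOf g.val := orderOf_units.symm
    _ ∣ (2 * (finrank ℚ A * (minpoly K g.val).natDegree))! :=
        orderOf_dvd_factorial_finrank_mul_natDegree_minpoly A K (Units.isOfFinOrder_val.2 hg)
    _ ∣ (2 * (finrank ℚ A * Fintype.card n))! := Nat.factorial_dvd_factorial (by gcongr)

/-- The order of a finite-order element of `GL_N(K)` is bounded by a constant depending
only on `k` and `N`, where `k` is finitely generated over `ℚ` and algebraically closed
in `K`. -/
theorem bounded_order_of_finite_order_elements_GL
    (k : Type) [Field k] [CharZero k]
    (hk : ∃ S : Finset k, IntermediateField.adjoin ℚ (S : Set k) = ⊤)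
    (N : ℕ) (hN : 0 < N) :
    ∃ C : ℕ, ∀ (K : Type) [Field K] [Algebra k K],
      (∀ x : K, IsAlgebraic k x → ∃ y : k, algebraMap k K y = x) →
      ∀ g : Matrix.GeneralLinearGroup (Fin N) K, IsOfFinOrder g → orderOf g ≤ C := by
  have : Algebra.EssFiniteType ℚ k := IntermediateField.fg_top_iff.1 hk
  exact ⟨_, fun K _ _ hK g hg ↦ Nat.le_of_dvd (Nat.factorial_pos _)
    (bounded_order_of_finite_order_elements_GL_general hK hg)⟩
end

section
/- For all positive integers J and B there exists a constant J' = J'(J, B) with the following property: for every group G and every normal subgroup N ⊴ G such that (a) every finite subgroup of N contains a normal abelian subgroup of index at most J, and (b) every finite subgroup of G/N has order at most B, every finite subgroup of G contains a normal abelian subgroup of index at most J'. -/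
/-!
Let `H` be a finite subgroup of `G`. Its intersection with `N` has index at most `B` in `H`, because
`H / (H ∩ N)` embeds in `G ⧸ N`, and contains an abelian subgroup of index at most `J`. The latter
has index at most `J * B` in `H` but need not be normal there; its normal core is the kernel of the
action of `H` on at most `J * B` cosets, so has index at most `(J * B)!`.
-/

open scoped Nat

theorem isMulCommutative_of_le {S M : Type*} [Mul M] [SetLike S M] [MulMemClass S M] [LE S]
    [IsConcreteLE S M] {s t : S} (hst : s ≤ t) [IsMulCommutative t] : IsMulCommutative s :=
  .of_setLike_mul_comm fun _ hx _ hy ↦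
    setLike_mul_comm (mem_of_le_of_mem hst hx) (mem_of_le_of_mem hst hy)

section

variable {G : Type*} [Group G]

theorem index_normalCore_dvd_factorial (H : Subgroup G) [H.FiniteIndex] :
    H.normalCore.index ∣ H.index ! := by
  rw [H.normalCore_eq_ker, Subgroup.index_ker, H.index_eq_card, ← Nat.card_perm]
  exact Subgroup.card_subgroup_dvd_card _

theorem exists_normal_isMulCommutative_index_le_factorial (A : Subgroup G) [A.FiniteIndex]
    [IsMulCommutative A] :
    ∃ C : Subgroup G, C.Normal ∧ IsMulCommutative C ∧ C.index ≤ A.index ! :=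
  ⟨A.normalCore, A.normalCore_normal, isMulCommutative_of_le A.normalCore_le,
    Nat.le_of_dvd A.index.factorial_pos (index_normalCore_dvd_factorial A)⟩

theorem relIndex_map_subtype_self (H : Subgroup G) (A : Subgroup H) :
    (A.map H.subtype).relIndex H = A.index :=
  congrArg Subgroup.index (Subgroup.comap_map_eq_self_of_injective H.subtype_injective A)

theorem relIndex_map_subtype_inf (H K : Subgroup G) (A : Subgroup ↥(H ⊓ K)) :
    (A.map (H ⊓ K).subtype).relIndex H = A.index * K.relIndex H := by
  rw [← Subgroup.relIndex_mul_relIndex _ _ H (Subgroup.map_subtype_le A) inf_le_left,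
    relIndex_map_subtype_self, Subgroup.inf_relIndex_left]

theorem relIndex_eq_card_map_mk' (N H : Subgroup G) [N.Normal] :
    N.relIndex H = Nat.card (H.map (QuotientGroup.mk' N)) := by
  rw [← Subgroup.relIndex_ker, QuotientGroup.ker_mk']

theorem jordan_of_extension_jordan_by_bounded_general {J B : ℕ} (N : Subgroup G) [N.Normal]
    (hN : ∀ K : Subgroup G, K ≤ N → Finite K →
      ∃ A : Subgroup K, IsMulCommutative A ∧ A.index ≤ J)
    (hQ : ∀ Q : Subgroup (G ⧸ N), Finite Q → Nat.card Q ≤ B)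
    (H : Subgroup G) [Finite H] :
    ∃ A : Subgroup H, A.Normal ∧ IsMulCommutative A ∧ A.index ≤ (J * B)! := by
  have finite_inf : Finite ↥(H ⊓ N) := Finite.Set.finite_inter_of_left (H : Set G) N
  have finite_map : Finite (H.map (QuotientGroup.mk' N)) := Finite.Set.finite_image (H : Set G) _
  obtain ⟨A, _, hAJ⟩ := hN (H ⊓ N) inf_le_right finite_inf
  let A' : Subgroup H := (A.map (H ⊓ N).subtype).subgroupOf H
  have index_le : A'.index ≤ J * B := calc
    A'.index = A.index * N.relIndex H := relIndex_map_subtype_inf H N A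
    _ = A.index * Nat.card (H.map (QuotientGroup.mk' N)) := by rw [relIndex_eq_card_map_mk']
    _ ≤ J * B := Nat.mul_le_mul hAJ (hQ _ finite_map)
  obtain ⟨C, hC, hC_comm, hC_index⟩ := exists_normal_isMulCommutative_index_le_factorial A'
  exact ⟨C, hC, hC_comm, hC_index.trans (Nat.factorial_le index_le)⟩

end

/-- Lemma 2.4 (Popov): an extension of a group with bounded finite subgroups by a
Jordan group is Jordan, with constant depending only on the two input constants. -/
theorem jordan_of_extension_jordan_by_bounded
    (J B : ℕ) (hJ : 0 < J) (hB : 0 < B) :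
    ∃ J' : ℕ, ∀ (G : Type) [Group G] (N : Subgroup G) [N.Normal],
      (∀ H : Subgroup G, H ≤ N → Finite H →
        ∃ A : Subgroup H, A.Normal ∧ (∀ x y : A, x * y = y * x) ∧ A.index ≤ J) →
      (∀ H : Subgroup (G ⧸ N), Finite H → Nat.card H ≤ B) →
      ∀ H : Subgroup G, Finite H →
        ∃ A : Subgroup H, A.Normal ∧ (∀ x y : A, x * y = y * x) ∧ A.index ≤ J' := by
  simp only [← isMulCommutative_iff]
  exact ⟨(J * B)!, fun G _ N _ hN hQ H _ ↦ jordan_of_extension_jordan_by_bounded_general N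
    (fun K hK hfin ↦ (hN K hK hfin).imp fun _ hA ↦ hA.2) hQ H⟩
end

section
/- Let R₁ and R₂ be positive integers. Let G be a group and N ⊴ G a normal subgroup such that every finite abelian subgroup of N can be generated by at most R₁ elements and every finite abelian subgroup of G/N can be generated by at most R₂ elements. Then every finite abelian subgroup of G can be generated by at most R₁ + R₂ elements. -/
/-!
For a homomorphism `f` on `G`, a subgroup `H` of `G` is generated by any generators of `H ⊓ f.ker`
together with lifts to `H` of any generators of `H.map f`, and both of these groups inherit
finiteness and commutativity from `H`.
-/

section

open Subgroup

variable {G Q : Type*} [Group G] [Group Q] (f : G →* Q) {H K : Subgroup G}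

theorem sup_inf_ker_eq_of_map_eq_map (hKH : K ≤ H) (hmap : K.map f = H.map f) :
    K ⊔ H ⊓ f.ker = H := by
  refine le_antisymm (sup_le hKH inf_le_left) fun h hh ↦ ?_
  obtain ⟨k, hk, hkh⟩ : f h ∈ K.map f := hmap ▸ mem_map_of_mem f hh
  have hker : k⁻¹ * h ∈ H ⊓ f.ker :=
    ⟨H.mul_mem (H.inv_mem (hKH hk)) hh, f.eq_iff.mp hkh.symm⟩
  simpa only [mul_inv_cancel_left] using mul_mem_sup hk hker

theorem exists_finset_card_eq_and_map_closure_eq {T : Finset Q}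
    (hT : closure (T : Set Q) = H.map f) :
    ∃ U : Finset G, U.card = T.card ∧ closure (U : Set G) ≤ H ∧
      (closure (U : Set G)).map f = H.map f := by
  classical
  have hsurj : Set.SurjOn f H T := subset_closure.trans hT.le
  obtain ⟨U, hUH, hinj, rfl⟩ := T.exists_subset_injOn_image_eq_of_surjOn (H : Set G) hsurj
  refine ⟨U, (Finset.card_image_of_injOn hinj).symm, (closure_le H).mpr hUH, ?_⟩
  rw [f.map_closure, ← Finset.coe_image, hT]

theorem exists_finset_card_le_add_and_closure_eq {S : Finset G} {T : Finset Q}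
    (hS : closure (S : Set G) = H ⊓ f.ker) (hT : closure (T : Set Q) = H.map f) :
    ∃ U : Finset G, U.card ≤ S.card + T.card ∧ closure (U : Set G) = H := by
  classical
  obtain ⟨U, hcard, hUH, hmap⟩ := exists_finset_card_eq_and_map_closure_eq f hT
  refine ⟨U ∪ S, ?_, ?_⟩
  · calc (U ∪ S).card ≤ U.card + S.card := Finset.card_union_le U S
      _ = S.card + T.card := by rw [hcard, add_comm]
  · rw [Finset.coe_union, Subgroup.closure_union, hS, sup_inf_ker_eq_of_map_eq_map f hUH hmap]

theorem rank_bound_of_extension_general {R₁ R₂ : ℕ}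
    (hker : ∀ K : Subgroup G, K ≤ f.ker → Finite K → (∀ x y : K, x * y = y * x) →
      ∃ S : Finset G, S.card ≤ R₁ ∧ closure (S : Set G) = K)
    (hQ : ∀ K : Subgroup Q, Finite K → (∀ x y : K, x * y = y * x) →
      ∃ T : Finset Q, T.card ≤ R₂ ∧ closure (T : Set Q) = K)
    (H : Subgroup G) [Finite H] (hcomm : ∀ x y : H, x * y = y * x) :
    ∃ U : Finset G, U.card ≤ R₁ + R₂ ∧ closure (U : Set G) = H := by
  have : IsMulCommutative H := .of_comm hcomm
  have hfin_inf : Finite ↥(H ⊓ f.ker) := .of_injective _ (inclusion_injective inf_le_left)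
  have hcomm_inf : ∀ x y : ↥(H ⊓ f.ker), x * y = y * x := fun x y ↦
    Subtype.ext (setLike_mul_comm x.2.1 y.2.1)
  have hfin_map : Finite (H.map f) := .of_surjective _ (f.subgroupMap_surjective H)
  obtain ⟨S, hS_card, hS⟩ := hker (H ⊓ f.ker) inf_le_right hfin_inf hcomm_inf
  obtain ⟨T, hT_card, hT⟩ := hQ (H.map f) hfin_map mul_comm'
  obtain ⟨U, hU_card, hU⟩ := exists_finset_card_le_add_and_closure_eq f hS hT
  exact ⟨U, hU_card.trans (add_le_add hS_card hT_card), hU⟩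

end

/-- Lemma 2.8: an extension of a group with finite abelian subgroups of rank at most
`R₂` by a group with finite abelian subgroups of rank at most `R₁` has finite abelian
subgroups of rank at most `R₁ + R₂`. -/
theorem rank_bound_of_extension
    (R₁ R₂ : ℕ) (hR₁ : 0 < R₁) (hR₂ : 0 < R₂)
    (G : Type) [Group G] (N : Subgroup G) [N.Normal]
    (h1 : ∀ H : Subgroup G, H ≤ N → Finite H → (∀ x y : H, x * y = y * x) →
      ∃ S : Finset G, S.card ≤ R₁ ∧ Subgroup.closure (S : Set G) = H)
    (h2 : ∀ H : Subgroup (G ⧸ N), Finite H → (∀ x y : H, x * y = y * x) →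
      ∃ S : Finset (G ⧸ N), S.card ≤ R₂ ∧ Subgroup.closure (S : Set (G ⧸ N)) = H)
    (H : Subgroup G) (hfin : Finite H) (hab : ∀ x y : H, x * y = y * x) :
    ∃ S : Finset G, S.card ≤ R₁ + R₂ ∧ Subgroup.closure (S : Set G) = H :=
  rank_bound_of_extension_general (QuotientGroup.mk' N)
    (by simpa only [QuotientGroup.ker_mk'] using h1) h2 H hab
end

section
/- For all positive integers B, J and R there exists a constant J' = J'(B, J, R) with the following property: for every group G and every normal subgroup N ⊴ G such that (a) every finite subgroup of N has order at most B, (b) every finite subgroup of G/N contains a normal abelian subgroup of index at most J, and (c) every finite abelian subgroup of G/N can be generated by at most R elements, every finite subgroup of G contains a normal abelian subgroup of index at most J'. -/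
/-!
Let `H` be a finite subgroup of the extension and let `P ≤ H` be the preimage of a normal abelian
subgroup of bounded index in the image of `H`. The commutators of `P` lie in the kernel of the
projection, which has at most `B` elements, and `P` is generated by this kernel together with lifts
of at most `R` elements. An element is central once it commutes with every generator, and its
commutator with a given generator takes at most `B` values, so the center of `P` has index at most
`B ^ (B + R)`. Being characteristic in `P`, the center is normal in `H`.
-/

open Function Subgroup

section Extension

variable {G Q : Type*} [Group G] [Group Q] {f : G →* Q}

theorem exists_finset_closure_eq_top_card_le_rank_ker_add_rank [Group.FG f.ker] [Group.FG Q]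
    (hf : Surjective f) :
    ∃ S : Finset G, closure (S : Set G) = ⊤ ∧ S.card ≤ Group.rank f.ker + Group.rank Q := by
  classical
  obtain ⟨K, hK_card, hK⟩ := Group.rank_spec f.ker
  obtain ⟨T, hT_card, hT⟩ := Group.rank_spec Q
  let S := K.image f.ker.subtype ∪ T.image (surjInv hf)
  have ker_le : f.ker ≤ closure (S : Set G) := by
    calc f.ker = (closure (K : Set f.ker)).map f.ker.subtype := by
          rw [hK, ← MonoidHom.range_eq_map, range_subtype]
      _ = closure (f.ker.subtype '' K) := MonoidHom.map_closure _ _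
      _ ≤ closure (S : Set G) := closure_mono <| by simp [S]
  have map_eq_top : (closure (S : Set G)).map f = ⊤ := by
    rw [MonoidHom.map_closure, eq_top_iff, ← hT]
    refine closure_mono fun t ht ↦ ⟨surjInv hf t, ?_, surjInv_eq hf t⟩
    exact Finset.mem_coe.2 <| Finset.mem_union_right _ <| Finset.mem_image_of_mem _ ht
  refine ⟨S, ?_, ?_⟩
  · rw [← comap_map_eq_self ker_le, map_eq_top, comap_top]
  · rw [← hK_card, ← hT_card]
    exact (Finset.card_union_le _ _).trans (add_le_add Finset.card_image_le Finset.card_image_le)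

theorem group_fg_of_fg_ker_of_surjective [Group.FG f.ker] [Group.FG Q] (hf : Surjective f) :
    Group.FG G :=
  let ⟨S, hS, _⟩ := exists_finset_closure_eq_top_card_le_rank_ker_add_rank hf
  Group.fg_iff'.2 ⟨S.card, S, rfl, hS⟩

theorem rank_le_rank_ker_add_rank [Group.FG G] [Group.FG f.ker] [Group.FG Q]
    (hf : Surjective f) : Group.rank G ≤ Group.rank f.ker + Group.rank Q :=
  let ⟨_, hS, hS_card⟩ := exists_finset_closure_eq_top_card_le_rank_ker_add_rank hf
  (Group.rank_le hS).trans hS_card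

variable (G) in
theorem group_rank_le_card [Finite G] : Group.rank G ≤ Nat.card G := by
  have := Fintype.ofFinite G
  rw [Nat.card_eq_fintype_card, ← Finset.card_univ]
  exact Group.rank_le (by rw [Finset.coe_univ, Subgroup.closure_univ])

theorem commutatorSet_subset_ker [IsMulCommutative Q] (f : G →* Q) :
    commutatorSet G ⊆ f.ker := by
  rintro _ ⟨x, y, rfl⟩
  rw [SetLike.mem_coe, MonoidHom.mem_ker, map_commutatorElement,
    commutatorElement_eq_one_iff_mul_comm]
  exact mul_comm' _ _

theorem index_center_le_card_ker_pow [IsMulCommutative Q] [Finite f.ker] [Group.FG Q]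
    (hf : Surjective f) :
    (center G).index ≤ Nat.card f.ker ^ (Nat.card f.ker + Group.rank Q) := by
  have := group_fg_of_fg_ker_of_surjective hf
  have ker_finite : (f.ker : Set G).Finite := Set.toFinite _
  have := (ker_finite.subset (commutatorSet_subset_ker f)).to_subtype
  calc (center G).index ≤ Nat.card (commutatorSet G) ^ Group.rank G := index_center_le_pow G
    _ ≤ Nat.card f.ker ^ Group.rank G :=
      Nat.pow_le_pow_left (Nat.card_mono ker_finite (commutatorSet_subset_ker f)) _
    _ ≤ Nat.card f.ker ^ (Nat.card f.ker + Group.rank Q) :=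
      Nat.pow_le_pow_right Nat.card_pos <|
        (rank_le_rank_ker_add_rank hf).trans (Nat.add_le_add_right (group_rank_le_card _) _)

theorem ker_subgroupComap (f : G →* Q) (A : Subgroup Q) :
    (f.subgroupComap A).ker = f.ker.subgroupOf (A.comap f) := by
  ext x
  exact Subtype.ext_iff

theorem exists_normal_isMulCommutative_index_le_card_ker_pow_mul_index [Finite f.ker]
    (hf : Surjective f) (A : Subgroup Q) [A.Normal] [IsMulCommutative A] [Group.FG A] :
    ∃ Z : Subgroup G, Z.Normal ∧ IsMulCommutative Z ∧
      Z.index ≤ Nat.card f.ker ^ (Nat.card f.ker + Group.rank A) * A.index := by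
  let P := A.comap f
  let g : P →* A := f.subgroupComap A
  have hg : Surjective g := f.subgroupComap_surjective_of_surjective A hf
  let ker_equiv : g.ker ≃* f.ker :=
    (MulEquiv.subgroupCongr (ker_subgroupComap f A)).trans
      (subgroupOfEquivOfLe (f.ker_le_comap A))
  have : Finite g.ker := .of_equiv _ ker_equiv.symm.toEquiv
  refine ⟨(center P).map P.subtype, inferInstance, inferInstance, ?_⟩
  rw [index_map_subtype, index_comap_of_surjective A hf, ← Nat.card_congr ker_equiv.toEquiv]
  exact Nat.mul_le_mul_right _ (index_center_le_card_ker_pow hg)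

end Extension

/-- The Jordan property with an explicit constant `J`. -/
def IsJordanWith (J : ℕ) (G : Type*) [Group G] : Prop :=
  ∀ H : Subgroup G, Finite H → ∃ A : Subgroup H, A.Normal ∧ IsMulCommutative A ∧ A.index ≤ J

/-- Boundedness of the finite subgroups, with an explicit bound `B` on their orders. -/
def FiniteSubgroupsCardLE (B : ℕ) (G : Type*) [Group G] : Prop :=
  ∀ H : Subgroup G, Finite H → Nat.card H ≤ B

/-- Boundedness of the rank of finite subgroups, with an explicit bound `R` on the number of
generators of the finite abelian ones. -/
def FiniteAbelianSubgroupsRankLE (R : ℕ) (G : Type*) [Group G] : Prop :=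
  ∀ (A : Subgroup G) [Finite A], IsMulCommutative A → Group.rank A ≤ R

section

variable {G F : Type*} [Group G] [Group F] [Finite F] {φ : F →* G}

theorem FiniteSubgroupsCardLE.card_le_of_injective {B : ℕ} (hG : FiniteSubgroupsCardLE B G)
    (hφ : Injective φ) : Nat.card F ≤ B := by
  have : Finite φ.range := .of_surjective _ φ.rangeRestrict_surjective
  rw [Nat.card_congr (MonoidHom.ofInjective hφ).toEquiv]
  exact hG φ.range ‹_›

theorem FiniteAbelianSubgroupsRankLE.rank_le_of_injective {R : ℕ}
    (hG : FiniteAbelianSubgroupsRankLE R G) [IsMulCommutative F] (hφ : Injective φ) :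
    Group.rank F ≤ R := by
  have : Finite φ.range := .of_surjective _ φ.rangeRestrict_surjective
  rw [Group.rank_congr (MonoidHom.ofInjective hφ)]
  exact hG φ.range inferInstance

end

theorem finiteSubgroupsCardLE_subgroup_iff {G : Type*} [Group G] {B : ℕ} {N : Subgroup G} :
    FiniteSubgroupsCardLE B N ↔ ∀ H : Subgroup G, H ≤ N → Finite H → Nat.card H ≤ B := by
  refine ⟨fun hN H hHN _ ↦ hN.card_le_of_injective (inclusion_injective hHN), fun hN H _ ↦ ?_⟩
  rw [← card_map_of_injective N.subtype_injective]
  exact hN _ (map_subtype_le H) (Finite.Set.finite_image _ _)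

theorem finiteAbelianSubgroupsRankLE_of_exists_closure_eq {G : Type*} [Group G] {R : ℕ}
    (hG : ∀ A : Subgroup G, Finite A → IsMulCommutative A →
      ∃ S : Finset G, S.card ≤ R ∧ closure (S : Set G) = A) :
    FiniteAbelianSubgroupsRankLE R G := by
  intro A _ hA
  obtain ⟨S, hS_card, rfl⟩ := hG A inferInstance hA
  exact (rank_closure_finset_le_card S).trans hS_card

theorem jordan_of_extension_bounded_by_jordan_with_bounded_rank_general
    {G Q : Type*} [Group G] [Group Q] {π : G →* Q} {B J R : ℕ}
    (hker : FiniteSubgroupsCardLE B π.ker) (hJordan : IsJordanWith J Q)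
    (hrank : FiniteAbelianSubgroupsRankLE R Q) :
    IsJordanWith (B ^ (B + R) * J) G := by
  intro H _
  let f : H →* H.map π := π.subgroupMap H
  have hf : Surjective f := π.subgroupMap_surjective H
  have : Finite (H.map π) := .of_surjective f hf
  obtain ⟨A, _, _, hA_index⟩ := hJordan (H.map π) this
  have card_ker_le : Nat.card f.ker ≤ B := by
    have incl_injective : Injective (H.subtype.subgroupComap π.ker) := by
      rw [← MonoidHom.ker_eq_bot_iff, ker_subgroupComap, ker_subtype, bot_subgroupOf]
    rw [ker_subgroupMap]
    exact hker.card_le_of_injective incl_injective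
  have rank_le : Group.rank A ≤ R :=
    hrank.rank_le_of_injective (φ := (H.map π).subtype.comp A.subtype)
      ((subtype_injective _).comp (subtype_injective _))
  obtain ⟨Z, hZ, hZ_comm, hZ_index⟩ :=
    exists_normal_isMulCommutative_index_le_card_ker_pow_mul_index hf A
  have B_pos : 0 < B := Nat.card_pos.trans_le card_ker_le
  refine ⟨Z, hZ, hZ_comm, hZ_index.trans ?_⟩
  gcongr

/-- Lemma 2.9 (Klyachko): an extension of a group that is Jordan (constant `J`) and has
finite abelian subgroups of rank at most `R` by a group with finite subgroups of order
at most `B` is Jordan with constant depending only on `B`, `J`, `R`. -/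
theorem jordan_of_extension_bounded_by_jordan_with_bounded_rank
    (B J R : ℕ) (hB : 0 < B) (hJ : 0 < J) (hR : 0 < R) :
    ∃ J' : ℕ, ∀ (G : Type) [Group G] (N : Subgroup G) [N.Normal],
      (∀ H : Subgroup G, H ≤ N → Finite H → Nat.card H ≤ B) →
      (∀ H : Subgroup (G ⧸ N), Finite H →
        ∃ A : Subgroup H, A.Normal ∧ (∀ x y : A, x * y = y * x) ∧ A.index ≤ J) →
      (∀ H : Subgroup (G ⧸ N), Finite H → (∀ x y : H, x * y = y * x) →
        ∃ S : Finset (G ⧸ N), S.card ≤ R ∧ Subgroup.closure (S : Set (G ⧸ N)) = H) →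
      ∀ H : Subgroup G, Finite H →
        ∃ A : Subgroup H, A.Normal ∧ (∀ x y : A, x * y = y * x) ∧ A.index ≤ J' := by
  refine ⟨B ^ (B + R) * J, fun G _ N _ hN hJordan hrank ↦ ?_⟩
  simp only [← isMulCommutative_iff] at hJordan hrank ⊢
  exact jordan_of_extension_bounded_by_jordan_with_bounded_rank_general
    (π := QuotientGroup.mk' N) (by rwa [QuotientGroup.ker_mk', finiteSubgroupsCardLE_subgroup_iff])
    hJordan (finiteAbelianSubgroupsRankLE_of_exists_closure_eq hrank)
end

section
/- Let G be a finite group with a normal subgroup F ⊴ G such that the quotient G/F is abelian and can be generated by r elements, where r ≥ 1. Then the index of the center Z(G) in G satisfies [G : Z(G)] ≤ |F|^(r·|F|). -/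
/-!
Every commutator of `G` lies in `F`, because `G ⧸ F` is abelian. If `x₁, …, xₙ` generate `G`, then
an element `g` is determined modulo the center by the commutators `⁅g, x₁⁆, …, ⁅g, xₙ⁆`, so the
center has index at most `|F| ^ n`. Lifts of generators of `G ⧸ F` together with generators of `F`
generate `G`, and `F` needs at most `|F| - 1` generators; hence one may take
`n ≤ r + (|F| - 1) ≤ r * |F|`.
-/

section

variable {G : Type*} [Group G]

theorem closure_union_eq_top_of_closure_image_mk_eq_top {N : Subgroup G} [N.Normal] {S T : Set G}
    (hS : Subgroup.closure (QuotientGroup.mk' N '' S) = ⊤) (hT : Subgroup.closure T = N) :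
    Subgroup.closure (S ∪ T) = ⊤ := by
  rw [Subgroup.closure_union, hT, sup_comm, ← QuotientGroup.comap_map_mk', MonoidHom.map_closure,
    hS, Subgroup.comap_top]

theorem exists_finset_closure_eq_top_card_le_rank_add_rank (N : Subgroup G) [N.Normal]
    [Group.FG N] [Group.FG (G ⧸ N)] :
    ∃ U : Finset G, U.card ≤ Group.rank (G ⧸ N) + Group.rank N ∧
      Subgroup.closure (U : Set G) = ⊤ := by
  classical
  obtain ⟨S, hS_card, hS⟩ := Group.rank_spec (G ⧸ N)
  obtain ⟨T, hT_card, hT⟩ := Group.rank_spec N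
  refine ⟨S.image Quotient.out ∪ T.image N.subtype, ?_, ?_⟩
  · calc (S.image Quotient.out ∪ T.image N.subtype).card
        ≤ (S.image Quotient.out).card + (T.image N.subtype).card := Finset.card_union_le _ _
      _ ≤ S.card + T.card := add_le_add Finset.card_image_le Finset.card_image_le
      _ = Group.rank (G ⧸ N) + Group.rank N := by rw [hS_card, hT_card]
  · have hlift : QuotientGroup.mk' N '' (Quotient.out '' (S : Set (G ⧸ N))) = S := by
      simp [Set.image_image]
    rw [Finset.coe_union, Finset.coe_image, Finset.coe_image]
    apply closure_union_eq_top_of_closure_image_mk_eq_top (N := N)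
    · rw [hlift, hS]
    · rw [← MonoidHom.map_closure, hT, ← MonoidHom.range_eq_map, N.range_subtype]

theorem group_fg_of_fg_quotient (N : Subgroup G) [N.Normal] [Group.FG N] [Group.FG (G ⧸ N)] :
    Group.FG G :=
  let ⟨U, _, hU⟩ := exists_finset_closure_eq_top_card_le_rank_add_rank N
  ⟨⟨U, hU⟩⟩

theorem group_rank_le_rank_quotient_add_rank [Group.FG G] (N : Subgroup G) [N.Normal]
    [Group.FG N] : Group.rank G ≤ Group.rank (G ⧸ N) + Group.rank N :=
  let ⟨_, hU_card, hU⟩ := exists_finset_closure_eq_top_card_le_rank_add_rank N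
  (Group.rank_le hU).trans hU_card

variable (G) in
theorem group_rank_lt_card [Finite G] : Group.rank G < Nat.card G := by
  classical
  have := Fintype.ofFinite G
  have hgen : Subgroup.closure ((Finset.univ.erase 1 : Finset G) : Set G) = ⊤ := by
    rw [← Subgroup.closure_insert_one, ← Finset.coe_insert,
      Finset.insert_erase (Finset.mem_univ 1), Finset.coe_univ, Subgroup.closure_univ]
  calc Group.rank G ≤ (Finset.univ.erase (1 : G)).card := Group.rank_le hgen
    _ < (Finset.univ : Finset G).card := Finset.card_erase_lt_of_mem (Finset.mem_univ 1)
    _ = Nat.card G := by rw [Finset.card_univ, Nat.card_eq_fintype_card]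

theorem commutatorSet_subset_of_isMulCommutative_quotient (N : Subgroup G) [N.Normal]
    [IsMulCommutative (G ⧸ N)] : commutatorSet G ⊆ N := by
  rw [← Subgroup.closure_le, ← commutator_eq_closure]
  exact Subgroup.Normal.quotient_commutative_iff_commutator_le.mp inferInstance

theorem index_center_le_card_pow_rank_quotient_add_rank (F : Subgroup G) [F.Normal] [Finite F]
    [IsMulCommutative (G ⧸ F)] [Group.FG (G ⧸ F)] :
    (Subgroup.center G).index ≤ Nat.card F ^ (Group.rank (G ⧸ F) + Group.rank F) := by
  have hsub : commutatorSet G ⊆ F := commutatorSet_subset_of_isMulCommutative_quotient F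
  have hF : (F : Set G).Finite := Set.toFinite _
  have : Finite (commutatorSet G) := hF.subset hsub
  have : Group.FG G := group_fg_of_fg_quotient F
  calc (Subgroup.center G).index
      ≤ Nat.card (commutatorSet G) ^ Group.rank G := Subgroup.index_center_le_pow G
    _ ≤ Nat.card F ^ Group.rank G := Nat.pow_le_pow_left (Nat.card_mono hF hsub) _
    _ ≤ Nat.card F ^ (Group.rank (G ⧸ F) + Group.rank F) :=
      Nat.pow_le_pow_right Nat.card_pos (group_rank_le_rank_quotient_add_rank F)

theorem index_center_le_of_abelian_quotient_general (F : Subgroup G) [F.Normal] [Finite F]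
    (r : ℕ) (hr : 1 ≤ r) (hab : ∀ x y : G ⧸ F, x * y = y * x)
    (hgen : ∃ S : Finset (G ⧸ F), S.card ≤ r ∧ Subgroup.closure (S : Set (G ⧸ F)) = ⊤) :
    (Subgroup.center G).index ≤ Nat.card F ^ (r * Nat.card F) := by
  obtain ⟨S, hS_card, hS⟩ := hgen
  have : IsMulCommutative (G ⧸ F) := ⟨⟨hab⟩⟩
  have : Group.FG (G ⧸ F) := ⟨⟨S, hS⟩⟩
  have hexponent : Group.rank (G ⧸ F) + Group.rank F ≤ r * Nat.card F :=
    calc Group.rank (G ⧸ F) + Group.rank F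
        ≤ r + r * Group.rank F :=
          add_le_add ((Group.rank_le hS).trans hS_card) (Nat.le_mul_of_pos_left _ hr)
      _ = r * (Group.rank F + 1) := by ring
      _ ≤ r * Nat.card F := Nat.mul_le_mul_left r (group_rank_lt_card F)
  exact (index_center_le_card_pow_rank_quotient_add_rank F).trans
    (Nat.pow_le_pow_right Nat.card_pos hexponent)

end

/-- The key computation in the proof of Lemma 2.9: for a finite group `G` with a normal
subgroup `F` whose quotient is abelian and generated by `r ≥ 1` elements, the index of
the center of `G` is at most `|F|^(r * |F|)`. -/
theorem index_center_le_of_abelian_quotient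
    (G : Type) [Group G] [Finite G] (F : Subgroup G) [F.Normal]
    (r : ℕ) (hr : 1 ≤ r)
    (hab : ∀ x y : G ⧸ F, x * y = y * x)
    (hgen : ∃ S : Finset (G ⧸ F), S.card ≤ r ∧
      Subgroup.closure (S : Set (G ⧸ F)) = ⊤) :
    (Subgroup.center G).index ≤ Nat.card F ^ (r * Nat.card F) :=
  index_center_le_of_abelian_quotient_general F r hr hab hgen
end

section
/- Let G be a group generated by N elements (for a positive integer N) whose commutator subgroup K = [G, G] is finite. Then the center Z(G) has finite index in G and [G : Z(G)] ≤ |K|^N. -/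
section

variable (G : Type*) [Group G]

theorem commutatorSet_subset_commutator : commutatorSet G ⊆ commutator G := by
  rw [commutator_eq_closure]
  exact Subgroup.subset_closure

theorem finite_commutatorSet_of_finite_commutator [Finite (commutator G)] :
    Finite (commutatorSet G) :=
  Finite.Set.subset (commutator G : Set G) (commutatorSet_subset_commutator G)

theorem card_commutatorSet_le_card_commutator [Finite (commutator G)] :
    Nat.card (commutatorSet G) ≤ Nat.card (commutator G) :=
  Nat.card_mono (commutator G : Set G).toFinite (commutatorSet_subset_commutator G)

end

theorem index_center_le_of_finite_commutator_general
    {G : Type*} [Group G] [Finite (commutatorSet G)] {N : ℕ}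
    (hgen : ∃ S : Finset G, S.card ≤ N ∧ Subgroup.closure (S : Set G) = ⊤) :
    (Subgroup.center G).index ≠ 0 ∧
      (Subgroup.center G).index ≤ Nat.card (commutatorSet G) ^ N := by
  obtain ⟨S, hcard, hclosure⟩ := hgen
  have : Group.FG G := Group.fg_iff'.mpr ⟨S.card, S, rfl, hclosure⟩
  have hrank : Group.rank G ≤ N := (Group.rank_le hclosure).trans hcard
  refine ⟨Subgroup.FiniteIndex.index_ne_zero, ?_⟩
  -- A coset of the center is determined by the commutators of a representative with generators.
  calc (Subgroup.center G).index
      ≤ Nat.card (commutatorSet G) ^ Group.rank G := Subgroup.index_center_le_pow G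
    _ ≤ Nat.card (commutatorSet G) ^ N := Nat.pow_le_pow_right Nat.card_pos hrank

/-- If a group `G` is generated by `N` elements and has finite commutator subgroup `K`,
then its center has finite index, at most `|K|^N`. -/
theorem index_center_le_of_finite_commutator
    (G : Type) [Group G] (N : ℕ) (hN : 0 < N)
    (hgen : ∃ S : Finset G, S.card ≤ N ∧ Subgroup.closure (S : Set G) = ⊤)
    (hK : Finite (commutator G)) :
    (Subgroup.center G).index ≠ 0 ∧
      (Subgroup.center G).index ≤ Nat.card (commutator G) ^ N := by
  have := finite_commutatorSet_of_finite_commutator G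
  exact (index_center_le_of_finite_commutator_general hgen).imp_right
    (·.trans (Nat.pow_le_pow_left (card_commutatorSet_le_card_commutator G) N))
end

section
/- For all positive integers J₁ and J₂ there exists a constant J = J(J₁, J₂) with the following property: for every group G and every normal subgroup N ⊴ G such that every finite subgroup of N contains a solvable subgroup of index at most J₁ and every finite subgroup of G/N contains a solvable subgroup of index at most J₂, every finite subgroup of G contains a solvable subgroup of index at most J. -/
/-!
Let `N` be a normal subgroup of `G` with a solvable subgroup of index `n`, and let `R` be the
solvable radical of `N`. The normal core of the given subgroup lies in `R`, so `N / R` has order at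
most `n!`; moreover `R` is characteristic in `N`, hence normal in `G`. Let `C` be the subgroup of
those elements of `G` which centralize `N / R`: it has index at most `(n!)!`, and `C ⊓ N` is
solvable because its image in `N / R` is commutative. Intersecting `C` with the preimage of a
solvable subgroup of `G / N` gives a solvable subgroup of `G`.
-/

open Subgroup
open scoped Nat

section

variable {G Q : Type*} [Group G] [Group Q]

theorem isSolvable_of_le {H K : Subgroup G} (h : H ≤ K) [Group.IsSolvable K] :
    Group.IsSolvable H :=
  Group.isSolvable_of_isSolvable_injective (inclusion_injective h)

theorem isSolvable_map (f : G →* Q) (H : Subgroup G) [Group.IsSolvable H] :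
    Group.IsSolvable (H.map f) :=
  Group.isSolvable_of_surjective (f.subgroupMap_surjective H)

theorem isSolvable_of_inf_ker_of_map (f : G →* Q) (H : Subgroup G)
    [Group.IsSolvable ↥(H ⊓ f.ker)] [Group.IsSolvable (H.map f)] : Group.IsSolvable H := by
  refine Group.isSolvable_of_ker_le_range (inclusion (inf_le_left : H ⊓ f.ker ≤ H))
    (f.subgroupMap H) fun x hx ↦ ?_
  have hx_ker : (x : G) ∈ f.ker := congrArg Subtype.val hx
  exact ⟨⟨x, x.2, hx_ker⟩, rfl⟩

theorem isSolvable_sup (H K : Subgroup G) [K.Normal] [Group.IsSolvable H] [Group.IsSolvable K] :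
    Group.IsSolvable ↥(H ⊔ K) := by
  have : Group.IsSolvable ↥((H ⊔ K) ⊓ (QuotientGroup.mk' K).ker) :=
    isSolvable_of_le (K := K) (by simp)
  have : Group.IsSolvable ((H ⊔ K).map (QuotientGroup.mk' K)) := by
    rw [Subgroup.map_sup, QuotientGroup.map_mk'_self, sup_bot_eq]
    exact isSolvable_map _ H
  exact isSolvable_of_inf_ker_of_map (QuotientGroup.mk' K) (H ⊔ K)

theorem index_normalCore_le_factorial (H : Subgroup G) [H.FiniteIndex] :
    H.normalCore.index ≤ H.index ! := by
  rw [normalCore_eq_ker, index_ker, index_eq_card, ← Nat.card_perm]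
  exact card_le_card_group _

theorem ker_conjNormal (N : Subgroup G) [N.Normal] :
    (MulAut.conjNormal : G →* MulAut N).ker = centralizer N := by
  ext g
  simp only [MonoidHom.mem_ker, MulEquiv.ext_iff, Subtype.ext_iff, MulAut.conjNormal_apply,
    MulAut.one_apply, mul_inv_eq_iff_eq_mul, Subtype.forall, mem_centralizer_iff, SetLike.mem_coe]
  exact forall₂_congr fun _ _ ↦ eq_comm

theorem index_centralizer_le_factorial_card (N : Subgroup G) [N.Normal] [Finite N] :
    (centralizer (N : Set G)).index ≤ (Nat.card N)! := by
  rw [← ker_conjNormal, index_ker, ← Nat.card_perm]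
  calc Nat.card (MulAut.conjNormal : G →* MulAut N).range
      ≤ Nat.card (MulAut N) := card_le_card_group _
    _ ≤ Nat.card (Equiv.Perm N) :=
      Nat.card_le_card_of_injective MulEquiv.toEquiv MulEquiv.toEquiv_injective

variable (G) in
/-- The solvable radical of a group, the subgroup generated by all its solvable normal subgroups.
It need not be solvable itself; it is when the group has a solvable subgroup of finite index, see
`isSolvable_solvableRadical`. -/
def solvableRadical : Subgroup G :=
  sSup {A | A.Normal ∧ Group.IsSolvable A}

theorem le_solvableRadical (A : Subgroup G) [hA : A.Normal] [hA_solv : Group.IsSolvable A] :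
    A ≤ solvableRadical G :=
  le_sSup ⟨hA, hA_solv⟩

instance characteristic_solvableRadical : (solvableRadical G).Characteristic := by
  refine characteristic_iff_le_comap.mpr fun σ ↦ sSup_le fun A ⟨_, _⟩ ↦ ?_
  have : (A.map σ.toMonoidHom).Normal := .map inferInstance _ σ.surjective
  have := isSolvable_map σ.toMonoidHom A
  exact map_le_iff_le_comap.mp (le_solvableRadical _)

theorem isSolvable_solvableRadical (S : Subgroup G) [S.FiniteIndex] [Group.IsSolvable S] :
    Group.IsSolvable (solvableRadical G) := by
  obtain ⟨R, ⟨_, _, _⟩, hR_min⟩ := exists_minimalFor_of_wellFoundedLT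
    (fun A : Subgroup G ↦ A.Normal ∧ Group.IsSolvable A ∧ A.FiniteIndex) index
    ⟨S.normalCore, inferInstance, isSolvable_of_le S.normalCore_le, inferInstance⟩
  suffices h : solvableRadical G ≤ R from isSolvable_of_le h
  refine sSup_le fun A ⟨_, _⟩ ↦ ?_
  by_contra hAR
  have h_lt : (R ⊔ A).index < R.index := index_strictAnti (left_lt_sup.mpr hAR)
  have h_le : R.index ≤ (R ⊔ A).index :=
    hR_min ⟨inferInstance, isSolvable_sup R A, finiteIndex_of_le le_sup_left⟩ h_lt.le
  exact h_lt.not_ge h_le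

theorem finiteIndex_solvableRadical (S : Subgroup G) [S.FiniteIndex] [Group.IsSolvable S] :
    (solvableRadical G).FiniteIndex :=
  have := isSolvable_of_le S.normalCore_le
  finiteIndex_of_le (le_solvableRadical S.normalCore)

theorem index_solvableRadical_le_factorial (S : Subgroup G) [S.FiniteIndex]
    [Group.IsSolvable S] : (solvableRadical G).index ≤ S.index ! := by
  have := isSolvable_of_le S.normalCore_le
  exact (index_antitone (le_solvableRadical S.normalCore)).trans (index_normalCore_le_factorial S)

theorem isSolvable_centralizer_inf (N : Subgroup G) :
    Group.IsSolvable ↥(centralizer (N : Set G) ⊓ N) :=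
  Group.isSolvable_of_comm fun a b ↦ Subtype.ext (mem_centralizer_iff.mp b.2.1 a a.2.2)

theorem exists_isSolvable_inf_and_index_le_factorial (R N : Subgroup G) [R.Normal] [N.Normal]
    [R.IsFiniteRelIndex N] [Group.IsSolvable R] :
    ∃ C : Subgroup G, Group.IsSolvable ↥(C ⊓ N) ∧ C.index ≤ (R.relIndex N)! := by
  let π := QuotientGroup.mk' R
  have hπ : Function.Surjective π := QuotientGroup.mk'_surjective R
  have h_card : Nat.card (N.map π) = R.relIndex N := by
    rw [← relIndex_ker, QuotientGroup.ker_mk']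
  have : (N.map π).Normal := .map inferInstance π hπ
  have : Finite (N.map π) := Nat.finite_of_card_ne_zero (h_card ▸ relIndex_ne_zero)
  let C := (centralizer (N.map π : Set (G ⧸ R))).comap π
  refine ⟨C, ?_, ?_⟩
  · have : Group.IsSolvable ↥(C ⊓ N ⊓ π.ker) := isSolvable_of_le (K := R) (by simp [π])
    have : Group.IsSolvable ((C ⊓ N).map π) := by
      have := isSolvable_centralizer_inf (N.map π)
      exact isSolvable_of_le ((map_inf_le C N π).trans (inf_le_inf_right _ (map_comap_le π _)))
    exact isSolvable_of_inf_ker_of_map π (C ⊓ N)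
  · rw [index_comap_of_surjective _ hπ, ← h_card]
    exact index_centralizer_le_factorial_card (N.map π)

theorem exists_isSolvable_inf_and_index_le_factorial_factorial (N : Subgroup G) [N.Normal]
    (S : Subgroup N) [S.FiniteIndex] [Group.IsSolvable S] :
    ∃ C : Subgroup G, Group.IsSolvable ↥(C ⊓ N) ∧ C.index ≤ (S.index !)! := by
  let R := (solvableRadical N).map N.subtype
  have := isSolvable_solvableRadical S
  have : Group.IsSolvable R := isSolvable_map N.subtype _
  have h_relIndex : R.relIndex N = (solvableRadical N).index := by
    rw [relIndex, subgroupOf, comap_map_eq_self_of_injective N.subtype_injective]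
  have := finiteIndex_solvableRadical S
  have : R.IsFiniteRelIndex N := ⟨h_relIndex ▸ FiniteIndex.index_ne_zero⟩
  obtain ⟨C, hC_solv, hC_index⟩ := exists_isSolvable_inf_and_index_le_factorial R N
  refine ⟨C, hC_solv, hC_index.trans (Nat.factorial_le ?_)⟩
  exact h_relIndex.trans_le (index_solvableRadical_le_factorial S)

theorem exists_isSolvable_index_le_mul_factorial_factorial (f : G →* Q)
    (S : Subgroup f.ker) [S.FiniteIndex] [Group.IsSolvable S]
    (T : Subgroup f.range) [Group.IsSolvable T] :
    ∃ U : Subgroup G, Group.IsSolvable U ∧ U.index ≤ T.index * (S.index !)! := by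
  obtain ⟨C, _, hC_index⟩ := exists_isSolvable_inf_and_index_le_factorial_factorial f.ker S
  let V := T.comap f.rangeRestrict
  have : Group.IsSolvable ↥(V ⊓ C ⊓ f.rangeRestrict.ker) := by
    rw [f.ker_rangeRestrict]
    exact isSolvable_of_le (inf_le_inf_right f.ker inf_le_right)
  have : Group.IsSolvable ((V ⊓ C).map f.rangeRestrict) :=
    isSolvable_of_le (map_le_iff_le_comap.mpr inf_le_left : _ ≤ T)
  refine ⟨V ⊓ C, isSolvable_of_inf_ker_of_map f.rangeRestrict (V ⊓ C), ?_⟩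
  calc (V ⊓ C).index ≤ V.index * C.index := index_inf_le
    _ = T.index * C.index := by rw [index_comap_of_surjective T f.rangeRestrict_surjective]
    _ ≤ T.index * (S.index !)! := Nat.mul_le_mul_left _ hC_index

theorem exists_isSolvable_index_le_of_mulEquiv (e : G ≃* Q) {n : ℕ}
    (h : ∃ S : Subgroup G, Group.IsSolvable S ∧ S.index ≤ n) :
    ∃ S : Subgroup Q, Group.IsSolvable S ∧ S.index ≤ n := by
  obtain ⟨S, _, hS⟩ := h
  exact ⟨S.map (e : G →* Q), isSolvable_map _ S, (index_map_equiv S e).trans_le hS⟩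

theorem solvably_jordan_of_extension_general (N : Subgroup G) [N.Normal] {J₁ J₂ : ℕ}
    (hN : ∀ H : Subgroup G, H ≤ N → Finite H →
      ∃ S : Subgroup H, Group.IsSolvable S ∧ S.index ≤ J₁)
    (hQ : ∀ H : Subgroup (G ⧸ N), Finite H →
      ∃ S : Subgroup H, Group.IsSolvable S ∧ S.index ≤ J₂)
    (H : Subgroup G) [Finite H] :
    ∃ S : Subgroup H, Group.IsSolvable S ∧ S.index ≤ J₂ * (J₁ !)! := by
  let f : H →* G ⧸ N := (QuotientGroup.mk' N).comp H.subtype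
  let e : f.ker ≃* f.ker.map H.subtype := f.ker.equivMapOfInjective _ H.subtype_injective
  have h_le : f.ker.map H.subtype ≤ N :=
    map_le_iff_le_comap.mpr fun x hx ↦ (QuotientGroup.eq_one_iff (x : G)).mp hx
  obtain ⟨S, _, hS⟩ := exists_isSolvable_index_le_of_mulEquiv e.symm
    (hN _ h_le (Finite.of_equiv _ e.toEquiv))
  obtain ⟨T, _, hT⟩ := hQ f.range (Finite.of_surjective _ f.rangeRestrict_surjective)
  obtain ⟨U, hU_solv, hU_index⟩ := exists_isSolvable_index_le_mul_factorial_factorial f S T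
  refine ⟨U, hU_solv, hU_index.trans ?_⟩
  gcongr

end

/-- Lemma 8.2: an extension of a solvably Jordan group by a solvably Jordan group is
solvably Jordan, with constant depending only on the two input constants. -/
theorem solvably_jordan_of_extension
    (J₁ J₂ : ℕ) (hJ₁ : 0 < J₁) (hJ₂ : 0 < J₂) :
    ∃ J : ℕ, ∀ (G : Type) [Group G] (N : Subgroup G) [N.Normal],
      (∀ H : Subgroup G, H ≤ N → Finite H →
        ∃ S : Subgroup H, IsSolvable S ∧ S.index ≤ J₁) →
      (∀ H : Subgroup (G ⧸ N), Finite H →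
        ∃ S : Subgroup H, IsSolvable S ∧ S.index ≤ J₂) →
      ∀ H : Subgroup G, Finite H →
        ∃ S : Subgroup H, IsSolvable S ∧ S.index ≤ J := by
  exact ⟨J₂ * (J₁ !)!, fun _ _ N _ hN hQ H _ ↦ solvably_jordan_of_extension_general N hN hQ H⟩
end

section
/- Let G be a group and F ⊴ G a finite normal subgroup such that the quotient G/F is solvable. Then the centralizer C = C_G(F) of F in G is a solvable subgroup of G, and its index satisfies [G : C] ≤ |Aut(F)|, where Aut(F) is the (finite) automorphism group of F. -/
open Subgroup

section

variable {G : Type*} [Group G]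

theorem isSolvable_of_isMulCommutative_ker {G' : Type*} [Group G'] [Group.IsSolvable G']
    (f : G →* G') [IsMulCommutative f.ker] : Group.IsSolvable G :=
  have : Group.IsSolvable f.ker := Group.isSolvable_of_comm mul_comm'
  Group.isSolvable_of_ker_le_range f.ker.subtype f (range_subtype _).ge

theorem isMulCommutative_subgroupOf_centralizer (H : Subgroup G) :
    IsMulCommutative (H.subgroupOf (centralizer (H : Set G))) :=
  ⟨⟨fun ⟨a, ha⟩ ⟨b, _⟩ ↦ Subtype.ext <| Subtype.ext <|
    mem_centralizer_iff.mp b.2 a (mem_subgroupOf.mp ha)⟩⟩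

theorem isSolvable_centralizer_of_isSolvable_quotient (N : Subgroup G) [N.Normal]
    [Group.IsSolvable (G ⧸ N)] : Group.IsSolvable (centralizer (N : Set G)) := by
  let π := (QuotientGroup.mk' N).domRestrict (centralizer (N : Set G))
  have ker_π : π.ker = N.subgroupOf (centralizer (N : Set G)) := by
    rw [MonoidHom.ker_domRestrict, QuotientGroup.ker_mk']
  have : IsMulCommutative π.ker := ker_π ▸ isMulCommutative_subgroupOf_centralizer N
  exact isSolvable_of_isMulCommutative_ker π

theorem relIndex_centralizer_normalizer_dvd_card_mulAut (H : Subgroup G) :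
    (centralizer (H : Set G)).relIndex (normalizer (H : Set G)) ∣ Nat.card (MulAut H) := by
  rw [relIndex, ← normalizerMonoidHom_ker, index_ker]
  exact card_subgroup_dvd_card _

theorem index_centralizer_dvd_card_mulAut (N : Subgroup G) [N.Normal] :
    (centralizer (N : Set G)).index ∣ Nat.card (MulAut N) := by
  simpa only [normalizer_eq_top, relIndex_top_right] using
    relIndex_centralizer_normalizer_dvd_card_mulAut N

theorem centralizer_solvable_of_finite_normal_with_solvable_quotient_general
    (N : Subgroup G) [N.Normal] [Finite (MulAut N)] [Group.IsSolvable (G ⧸ N)] :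
    Group.IsSolvable (centralizer (N : Set G)) ∧
      (centralizer (N : Set G)).index ≤ Nat.card (MulAut N) :=
  ⟨isSolvable_centralizer_of_isSolvable_quotient N,
    Nat.le_of_dvd Nat.card_pos (index_centralizer_dvd_card_mulAut N)⟩

end

/-- The main step of Lemma 8.2: if `F` is a finite normal subgroup of `G` with solvable
quotient `G ⧸ F`, then the centralizer of `F` in `G` is solvable of index at most
`|Aut(F)|`. -/
theorem centralizer_solvable_of_finite_normal_with_solvable_quotient
    (G : Type) [Group G] (F : Subgroup G) [F.Normal] [Finite F]
    (hsolv : IsSolvable (G ⧸ F)) :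
    IsSolvable (Subgroup.centralizer (F : Set G)) ∧
      (Subgroup.centralizer (F : Set G)).index ≤ Nat.card (MulAut F) :=
  have : Group.IsSolvable (G ⧸ F) := hsolv
  centralizer_solvable_of_finite_normal_with_solvable_quotient_general F
end
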